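/- arXiv:2108.10214 — 2 statements merged into one kernel-verified Lean document; each statement's English description precedes it below -/
import Mathlib

section
/- With the notation of the iterated integrals Ω at φ = π/4, one has Ω_{2,1,3,3} = (iπ³/4)·log 2 − iπ·ζ(3). -/
noncomputable section

/-- `p₁ = e^{iπ/4}` -/
def p₁ : ℂ := Complex.exp (Complex.I * ((Real.pi : ℂ) / 4))
/-- `p₂ = -e^{-iπ/4}` -/
def p₂ : ℂ := -Complex.exp (-(Complex.I * ((Real.pi : ℂ) / 4)))
/-- `p₃ = -p₁` -/
def p₃ : ℂ := -p₁
/-- `p₄ = -p₂` -/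
def p₄ : ℂ := -p₂

def F₁ (z : ℂ) : ℂ := 1 / (z - p₁) - 1 / (z - p₂) + 1 / (z - p₃) - 1 / (z - p₄)

def F₂ (z : ℂ) : ℂ := 1 / (z - p₁) - 1 / (z - p₂) - 1 / (z - p₃) + 1 / (z - p₄)

def F₃ (z : ℂ) : ℂ := 1 / (z - p₁) + 1 / (z - p₂) - 1 / (z - p₃) - 1 / (z - p₄)

/-- Iterated integral along `[0, z]`:
`Omega [F_{i₁}, …, F_{iₙ}] z = Ω_{i₁,…,iₙ}(z)`, defined recursively by
`Ω_{i₁,…,i_k}(z) = ∫₀ᶻ Ω_{i₁,…,i_{k-1}}(t) · F_{i_k}(t) dt`, with `Ω_∅ ≡ 1`. -/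
def Omega (fs : List (ℂ → ℂ)) : ℝ → ℂ :=
  fs.foldl (fun g f => fun z => ∫ t in (0:ℝ)..z, g t * f (t : ℂ)) (fun _ => 1)

open Filter Topology

lemma hasSum_diag {g : ℕ × ℕ → ℝ} (hg : Summable g) :
    HasSum (fun N : ℕ => ∑ k ∈ Finset.range (N+1), g (k, N - k)) (∑' x, g x) := by
  have h := (Finset.HasAntidiagonal.sigmaAntidiagonalEquivProd (A := ℕ)).hasSum_iff.mpr hg.hasSum
  have h2 := h.sigma (g := fun N => ∑ p ∈ Finset.HasAntidiagonal.antidiagonal N, g p) (fun N => by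
    have := hasSum_fintype (fun c : Finset.HasAntidiagonal.antidiagonal N => g c.1)
    rw [Finset.sum_coe_sort (Finset.HasAntidiagonal.antidiagonal N) g] at this
    exact this)
  refine h2.congr_fun ?_ |> fun h => h
  intro N
  rw [Finset.Nat.sum_antidiagonal_eq_sum_range_succ_mk]

def UU (a : ℝ) (N : ℕ) : ℝ := ∑ k ∈ Finset.range N, 1 / (a * k + 1)

lemma lemA {a : ℝ} (ha : 0 < a)
    (hg : Summable (fun x : ℕ × ℕ => 1 / ((a * x.1 + 1) * (a * x.2 + 1) * (a * (x.1 + x.2) + 2)))) :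
    HasSum (fun N : ℕ => 2 * UU a (N+1) / (a * N + 2)^2)
      (∑' x : ℕ × ℕ, 1 / ((a * x.1 + 1) * (a * x.2 + 1) * (a * (x.1 + x.2) + 2))) := by
  convert hasSum_diag hg using 2 with N
  have h1 : ∀ k ∈ Finset.range (N+1), 1 / ((a * (k:ℝ) + 1) * (a * ((N - k : ℕ):ℝ) + 1) * (a * (k + ((N - k : ℕ):ℝ)) + 2))
     = (1 / (a * k + 1) + 1 / (a * ((N - k : ℕ):ℝ) + 1)) / (a * N + 2)^2 := by
    intro k hk
    have hk' : k ≤ N := by simpa [Nat.lt_succ_iff] using hk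
    have e : (N:ℝ) = k + ((N - k : ℕ):ℝ) := by rw [Nat.cast_sub hk']; ring
    rw [e]
    have : 0 < a * (k:ℝ) + 1 := by positivity
    have : 0 < a * ((N - k : ℕ):ℝ) + 1 := by positivity
    have : 0 < a * (k + ((N - k : ℕ):ℝ)) + 2 := by positivity
    rw [eq_div_iff (by positivity)]
    generalize ((N - k : ℕ):ℝ) = q at *
    field_simp
    ring
  rw [Finset.sum_congr rfl h1, ← Finset.sum_div, Finset.sum_add_distrib]
  have h2 := Finset.sum_range_reflect (fun k : ℕ => 1 / (a * (k:ℝ) + 1)) (N+1)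
  simp only [Nat.add_sub_cancel] at h2
  have h3 : ∀ j, N + 1 - 1 - j = N - j := by intro j; omega
  rw [h2]
  unfold UU; ring

lemma telescope {u : ℕ → ℝ} (hu : Tendsto u atTop (𝓝 0)) (k : ℕ)
    (hs : Summable (fun m => u m - u (m + k))) :
    HasSum (fun m => u m - u (m + k)) (∑ i ∈ Finset.range k, u i) := by
  rw [hs.hasSum_iff_tendsto_nat]
  have h : ∀ n, ∑ i ∈ Finset.range n, (u i - u (i + k)) =
      ∑ i ∈ Finset.range k, u i - ∑ i ∈ Finset.range k, u (n + i) := by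
    intro n
    have e1 := Finset.sum_range_add u n k
    have e2 := Finset.sum_range_add u k n
    rw [Finset.sum_sub_distrib]
    simp only [add_comm _ k] at *
    linarith
  simp only [h]
  have : Tendsto (fun n => ∑ i ∈ Finset.range k, u (n + i)) atTop (𝓝 (∑ i ∈ Finset.range k, 0)) :=
    tendsto_finsetSum _ (fun i _ => hu.comp (tendsto_add_atTop_nat i))
  simpa using tendsto_const_nhds.sub this

lemma lemB {a : ℝ} (ha : 0 < a)
    (hg : Summable (fun x : ℕ × ℕ => 1 / ((a * (x.1 + 1)) * (a * x.2 + 1) * (a * (x.2 + x.1 + 1) + 1)))) :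
    HasSum (fun N : ℕ => UU a (N+1) / (a * (N + 1))^2)
      (∑' x : ℕ × ℕ, 1 / ((a * (x.1 + 1)) * (a * x.2 + 1) * (a * (x.2 + x.1 + 1) + 1))) := by
  refine hg.hasSum.prod_fiberwise (fun N => ?_)
  have hN := hg.prod_factor N
  have hu : Tendsto (fun m : ℕ => 1 / (a * (m:ℝ) + 1)) atTop (𝓝 0) := by
    have : Tendsto (fun m : ℕ => a * (m:ℝ) + 1) atTop atTop :=
      tendsto_atTop_add_const_right _ _ (tendsto_natCast_atTop_atTop.const_mul_atTop ha)
    have h := this.inv_tendsto_atTop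
    refine h.congr (fun m => ?_)
    simp
  have e : ∀ m : ℕ, 1 / ((a * ((N:ℝ) + 1)) * (a * (m:ℝ) + 1) * (a * (m + N + 1) + 1)) =
     (1 / (a * (m:ℝ) + 1) - 1 / (a * ((m + (N + 1) : ℕ):ℝ) + 1)) / (a * (N + 1))^2 := by
    intro m
    have : 0 < a * (m:ℝ) + 1 := by positivity
    have : 0 < a * ((m:ℝ) + N + 1) + 1 := by positivity
    have : 0 < a * ((m:ℝ) + (N + 1)) + 1 := by positivity
    push_cast
    field_simp
    ring
  simp only [e] at hN ⊢
  have hN2 := (hN.mul_right ((a * ((N:ℝ) + 1))^2)).congr (g := fun m : ℕ => 1 / (a * (m:ℝ) + 1) - 1 / (a * ((m + (N + 1) : ℕ):ℝ) + 1)) (by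
    intro m
    have : 0 < (a * ((N:ℝ) + 1))^2 := by positivity
    field_simp)
  exact (telescope hu (N+1) hN2).div_const _

def tt (x : ℕ × ℕ) : ℝ := 1 / (((x.1:ℝ) + 1) * (x.2 + 1) * (x.1 + x.2 + 2))

lemma tt_summable : Summable tt := by
  have h1 : Summable (fun n : ℕ => 1 / ((n:ℝ) + 1) ^ (3/2 : ℝ)) := by
    have := (summable_nat_add_iff 1).mpr (Real.summable_one_div_nat_rpow.mpr (by norm_num : (1:ℝ) < 3/2))
    simpa using this
  have h2 := h1.mul_of_nonneg h1 (fun _ => by positivity) (fun _ => by positivity)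
  refine Summable.of_nonneg_of_le (fun x => by unfold tt; positivity) (fun x => ?_) h2
  unfold tt
  rw [one_div_mul_one_div]
  apply one_div_le_one_div_of_le (by positivity)
  set p := (x.1:ℝ) + 1 with hp
  set q := (x.2:ℝ) + 1 with hq
  have hp0 : 0 < p := by positivity
  have hq0 : 0 < q := by positivity
  have e : ∀ y : ℝ, 0 < y → y ^ (3/2 : ℝ) = y * √y := by
    intro y hy
    rw [show (3/2:ℝ) = 1 + 1/2 by norm_num, Real.rpow_add hy, Real.rpow_one, Real.sqrt_eq_rpow]
  rw [e p hp0, e q hq0]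
  have h3 : √p * √q ≤ (x.1:ℝ) + x.2 + 2 := by
    have : (x.1:ℝ) + x.2 + 2 = √p^2 + √q^2 := by
      rw [Real.sq_sqrt hp0.le, Real.sq_sqrt hq0.le]; ring
    rw [this]
    nlinarith [sq_nonneg (√p - √q), Real.sqrt_nonneg p, Real.sqrt_nonneg q, mul_nonneg (Real.sqrt_nonneg p) (Real.sqrt_nonneg q)]
  calc p * √p * (q * √q) = p * q * (√p * √q) := by ring
    _ ≤ _ := by gcongr

lemma zeta3_summable : Summable (fun n : ℕ => 1 / ((n:ℝ) + 1)^3) := by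
  have := (summable_nat_add_iff 1).mpr (Real.summable_one_div_nat_pow.mpr (by norm_num : 1 < 3))
  simpa using this

def Z3 : ℝ := ∑' n : ℕ, 1 / ((n:ℝ) + 1)^3

lemma tt_tsum : ∑' x, tt x = 2 * Z3 := by
  have eA : (fun x : ℕ × ℕ => 1 / (((1:ℝ) * x.1 + 1) * (1 * x.2 + 1) * (1 * (x.1 + x.2) + 2))) = tt := by
    funext x; unfold tt; ring
  have eB : (fun x : ℕ × ℕ => 1 / (((1:ℝ) * (x.1 + 1)) * (1 * x.2 + 1) * (1 * (x.2 + x.1 + 1) + 1))) = tt := by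
    funext x; unfold tt; congr 1; ring
  have hA := lemA (a := 1) one_pos (by rw [eA]; exact tt_summable)
  have hB := lemB (a := 1) one_pos (by rw [eB]; exact tt_summable)
  rw [eA] at hA; rw [eB] at hB
  -- X
  have hX : HasSum (fun N : ℕ => UU 1 N / ((N:ℝ) + 1)^2) (∑' x, tt x - Z3) := by
    have := hB.sub zeta3_summable.hasSum
    refine this.congr_fun ?_ |> fun h => h
    intro N
    simp only [UU, Finset.sum_range_succ]
    have : (N:ℝ) + 1 ≠ 0 := by positivity
    field_simp
    ring
  have hX2 : HasSum (fun N : ℕ => UU 1 N / ((N:ℝ) + 1)^2) ((∑' x, tt x) / 2) := by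
    rw [← hasSum_nat_add_iff' 1]
    simp only [Finset.range_one, Finset.sum_singleton]
    have h0 : UU 1 0 = 0 := by simp [UU]
    rw [h0]
    have := hA.div_const 2
    rw [zero_div, sub_zero]
    refine this.congr_fun ?_ |> fun h => h
    intro N
    push_cast
    have : (N:ℝ) + 1 + 1 = 1 * N + 2 := by ring
    rw [this]; ring
  have := hX.unique hX2
  linarith

lemma tsum_four {g : ℕ × ℕ → ℝ} (hg : Summable g) :
    ∑' x, g x = (∑' x : ℕ × ℕ, g (2 * x.1, 2 * x.2)) + (∑' x : ℕ × ℕ, g (2 * x.1, 2 * x.2 + 1)) +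
     ((∑' x : ℕ × ℕ, g (2 * x.1 + 1, 2 * x.2)) + (∑' x : ℕ × ℕ, g (2 * x.1 + 1, 2 * x.2 + 1))) := by
  have i0 : Function.Injective (fun n : ℕ => 2 * n) := fun a b h => by simpa using h
  have i1 : Function.Injective (fun n : ℕ => 2 * n + 1) := fun a b h => by simpa using h
  have s00 : Summable (fun x : ℕ × ℕ => g (2 * x.1, 2 * x.2)) := hg.comp_injective (i0.prodMap i0)
  have s01 : Summable (fun x : ℕ × ℕ => g (2 * x.1, 2 * x.2 + 1)) := hg.comp_injective (i0.prodMap i1)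
  have s10 : Summable (fun x : ℕ × ℕ => g (2 * x.1 + 1, 2 * x.2)) := hg.comp_injective (i1.prodMap i0)
  have s11 : Summable (fun x : ℕ × ℕ => g (2 * x.1 + 1, 2 * x.2 + 1)) := hg.comp_injective (i1.prodMap i1)
  have hm := hg.prod
  rw [hg.tsum_prod, ← tsum_even_add_odd (f := fun m => ∑' n, g (m, n)) (hm.comp_injective i0) (hm.comp_injective i1),
    s00.tsum_prod, s01.tsum_prod, s10.tsum_prod, s11.tsum_prod,
    ← s00.prod.tsum_add s01.prod, ← s10.prod.tsum_add s11.prod]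
  have key : ∀ k : ℕ, ∑' n, g (k, n) = ∑' n, g (k, 2 * n) + ∑' n, g (k, 2 * n + 1) := by
    intro k
    have h := hg.prod_factor k
    exact (tsum_even_add_odd (f := fun n => g (k, n)) (h.comp_injective i0) (h.comp_injective i1)).symm
  congr 1
  · exact tsum_congr fun m => key (2 * m)
  · exact tsum_congr fun m => key (2 * m + 1)

lemma tt_alt : ∑' x : ℕ × ℕ, (-1:ℝ)^(x.1 + x.2) * tt x = Z3 / 4 := by
  have i0 : Function.Injective (fun n : ℕ => 2 * n) := fun a b h => by simpa using h
  have i1 : Function.Injective (fun n : ℕ => 2 * n + 1) := fun a b h => by simpa using h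
  have s00 : Summable (fun x : ℕ × ℕ => tt (2 * x.1, 2 * x.2)) := tt_summable.comp_injective (i0.prodMap i0)
  have s10 : Summable (fun x : ℕ × ℕ => tt (2 * x.1 + 1, 2 * x.2)) := tt_summable.comp_injective (i1.prodMap i0)
  have hs : Summable (fun x : ℕ × ℕ => (-1:ℝ)^(x.1 + x.2) * tt x) := by
    refine Summable.of_norm_bounded tt_summable (fun x => ?_)
    simp [abs_of_nonneg (show 0 ≤ tt x by unfold tt; positivity)]
  have eA : (fun x : ℕ × ℕ => 1 / (((2:ℝ) * x.1 + 1) * (2 * x.2 + 1) * (2 * (x.1 + x.2) + 2))) = fun x : ℕ × ℕ => tt (2 * x.1, 2 * x.2) := by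
    funext x; unfold tt; push_cast; congr 1; ring
  have eB : (fun x : ℕ × ℕ => 1 / (((2:ℝ) * (x.1 + 1)) * (2 * x.2 + 1) * (2 * (x.2 + x.1 + 1) + 1))) = fun x : ℕ × ℕ => tt (2 * x.1 + 1, 2 * x.2) := by
    funext x; unfold tt; push_cast; congr 1; ring
  have hA := lemA (a := 2) two_pos (by rw [eA]; exact s00)
  have hB := lemB (a := 2) two_pos (by rw [eB]; exact s10)
  rw [eA] at hA; rw [eB] at hB
  have h1 : (∑' x : ℕ × ℕ, tt (2 * x.1, 2 * x.2)) = 2 * ∑' x : ℕ × ℕ, tt (2 * x.1 + 1, 2 * x.2) := by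
    refine hA.unique ?_
    refine (hB.mul_left 2).congr_fun ?_ |> fun h => h
    intro N
    have : (2:ℝ) * N + 2 = 2 * (N + 1) := by ring
    rw [this]; ring
  have h2 : (∑' x : ℕ × ℕ, tt (2 * x.1, 2 * x.2 + 1)) = ∑' x : ℕ × ℕ, tt (2 * x.1 + 1, 2 * x.2) := by
    rw [← (Equiv.prodComm ℕ ℕ).tsum_eq]
    refine tsum_congr fun x => ?_
    simp only [Equiv.prodComm_apply, Prod.fst_swap, Prod.snd_swap, tt]
    congr 1; push_cast; ring
  have h3 : (∑' x : ℕ × ℕ, tt (2 * x.1 + 1, 2 * x.2 + 1)) = Z3 / 4 := by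
    have : Z3 / 4 = (1/8) * ∑' x, tt x := by rw [tt_tsum]; ring
    rw [this, ← tsum_mul_left]
    refine tsum_congr fun x => ?_
    unfold tt; push_cast
    have : (0:ℝ) < x.1 + 1 := by positivity
    have : (0:ℝ) < x.2 + 1 := by positivity
    have : (0:ℝ) < x.1 + x.2 + 2 := by positivity
    rw [one_div_mul_one_div]; congr 1; ring
  rw [tsum_four hs]
  have p00 : ∀ x : ℕ × ℕ, (-1:ℝ)^(2 * x.1 + 2 * x.2) = 1 := fun x => Even.neg_one_pow ⟨x.1 + x.2, by ring⟩
  have p01 : ∀ x : ℕ × ℕ, (-1:ℝ)^(2 * x.1 + (2 * x.2 + 1)) = -1 := fun x => Odd.neg_one_pow ⟨x.1 + x.2, by ring⟩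
  have p10 : ∀ x : ℕ × ℕ, (-1:ℝ)^(2 * x.1 + 1 + 2 * x.2) = -1 := fun x => Odd.neg_one_pow ⟨x.1 + x.2, by ring⟩
  have p11 : ∀ x : ℕ × ℕ, (-1:ℝ)^(2 * x.1 + 1 + (2 * x.2 + 1)) = 1 := fun x => Even.neg_one_pow ⟨x.1 + x.2 + 1, by ring⟩
  simp only [p00, p01, p10, p11, one_mul, neg_one_mul, tsum_neg]
  rw [h3, h2, h1]; ring

lemma geo_rem (w : ℝ) (hw : 0 ≤ w) (N : ℕ) :
    |1 / (1 + w) - ∑ n ∈ Finset.range N, (-w)^n| ≤ w^N := by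
  have h : 1 / (1 + w) - ∑ n ∈ Finset.range N, (-w)^n = (-w)^N / (1 + w) := by
    have h1 : (-w) ≠ 1 := by linarith
    rw [geom_sum_eq h1]
    have : (1 + w) ≠ 0 := by positivity
    have : (-w - 1) ≠ 0 := by intro h; apply h1; linarith
    field_simp
    ring
  rw [h, abs_div, abs_pow, abs_neg, abs_of_nonneg hw, abs_of_pos (by positivity : 0 < 1 + w)]
  exact div_le_self (by positivity) (by linarith)

def AA (N : ℕ) : ℝ := ∑ n ∈ Finset.range N, (-1:ℝ)^n / (n + 1)

lemma AA_tendsto : Tendsto AA atTop (𝓝 (Real.log 2)) := by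
  have h1 : ∫ x in (0:ℝ)..1, 1 / (1 + x) = Real.log 2 := by
    have := intervalIntegral.integral_comp_add_left (fun x : ℝ => 1 / x) (a := 0) (b := 1) 1
    rw [this, integral_one_div_of_pos (by norm_num) (by norm_num)]
    norm_num
  have i1 : IntervalIntegrable (fun x : ℝ => 1 / (1 + x)) MeasureTheory.volume 0 1 := by
    apply ContinuousOn.intervalIntegrable
    intro x hx
    rw [Set.uIcc_of_le zero_le_one] at hx
    have : 1 + x ≠ 0 := by linarith [hx.1]
    exact ContinuousAt.continuousWithinAt (by fun_prop (disch := assumption))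
  have h2 : ∀ N, ∫ x in (0:ℝ)..1, ∑ n ∈ Finset.range N, (-x)^n = AA N := by
    intro N
    rw [intervalIntegral.integral_finsetSum (fun n _ => (by fun_prop : Continuous fun x : ℝ => (-x)^n).intervalIntegrable _ _)]
    refine Finset.sum_congr rfl fun n _ => ?_
    have : ∀ x : ℝ, (-x)^n = (-1)^n * x^n := fun x => by rw [neg_eq_neg_one_mul, mul_pow]
    rw [intervalIntegral.integral_congr (fun x _ => this x), intervalIntegral.integral_const_mul, integral_pow]
    simp; ring
  have h3 : ∀ N, |AA N - Real.log 2| ≤ 1 / ((N:ℝ) + 1) := by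
    intro N
    rw [abs_sub_comm, ← h1, ← h2 N, ← intervalIntegral.integral_sub i1 ((by fun_prop : Continuous fun x : ℝ => ∑ n ∈ Finset.range N, (-x)^n).intervalIntegrable _ _)]
    have := intervalIntegral.norm_integral_le_of_norm_le (μ := MeasureTheory.volume) (a := 0) (b := 1) (f := fun x : ℝ => 1 / (1 + x) - ∑ n ∈ Finset.range N, (-x)^n) (g := fun x => x^N) zero_le_one
      (by filter_upwards with x hx; exact geo_rem x hx.1.le N) ((by fun_prop : Continuous fun x : ℝ => x^N).intervalIntegrable _ _)
    simpa [integral_pow] using this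
  rw [tendsto_iff_dist_tendsto_zero]
  refine squeeze_zero (fun _ => dist_nonneg) (fun N => ?_) tendsto_one_div_add_atTop_nhds_zero_nat
  exact h3 N

lemma fiber (j : ℕ) : HasSum (fun i : ℕ => (-1:ℝ)^(j + i) * tt (j, i))
    ((Real.log 2 * (1 + (-1)^j) - AA (j+1)) / ((j:ℝ) + 1)^2) := by
  have hs : Summable (fun i : ℕ => (-1:ℝ)^(j + i) * tt (j, i)) := by
    refine Summable.of_norm_bounded (tt_summable.prod_factor j) (fun x => ?_)
    simp [abs_of_nonneg (show 0 ≤ tt (j, x) by unfold tt; positivity)]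
  rw [hs.hasSum_iff_tendsto_nat]
  have h : ∀ N, ∑ i ∈ Finset.range N, (-1:ℝ)^(j + i) * tt (j, i) =
      ((-1)^j * AA N + (AA (N + (j + 1)) - AA (j+1))) / ((j:ℝ) + 1)^2 := by
    intro N
    induction N with
    | zero => simp [AA]
    | succ N ih =>
      rw [Finset.sum_range_succ, ih]
      have e1 : AA (N + 1) = AA N + (-1:ℝ)^N / (N + 1) := by simp [AA, Finset.sum_range_succ]
      have e2 : AA (N + 1 + (j + 1)) = AA (N + (j+1)) + (-1:ℝ)^(N + (j+1)) / (N + (j + 1) + 1) := by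
        rw [show N + 1 + (j+1) = N + (j + 1) + 1 by ring]; simp [AA, Finset.sum_range_succ]
      rw [e1, e2, pow_add, pow_add, pow_add]
      unfold tt
      have : (0:ℝ) < j + 1 := by positivity
      have : (0:ℝ) < N + 1 := by positivity
      have : (0:ℝ) < j + N + 2 := by positivity
      have e3 : (N:ℝ) + (j + 1) + 1 = j + N + 2 := by ring
      simp only [e3]
      field_simp
      ring
  simp only [h]
  have h1 := AA_tendsto.comp (tendsto_add_atTop_nat (j+1))
  have := (((AA_tendsto.const_mul ((-1)^j)).add (h1.sub_const (AA (j+1)))).div_const (((j:ℝ) + 1)^2))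
  have e : (Real.log 2 * (1 + (-1) ^ j) - AA (j + 1)) / ((j:ℝ) + 1) ^ 2 =
    ((-1) ^ j * Real.log 2 + (Real.log 2 - AA (j + 1))) / ((j:ℝ) + 1) ^ 2 := by ring
  rw [e]
  exact this

lemma alt_hasSum (k : ℕ) {s : ℝ} (h : HasSum (fun n : ℕ => 1 / ((n:ℝ) + 1)^k) s) :
    HasSum (fun n : ℕ => (-1:ℝ)^n / ((n:ℝ) + 1)^k) ((1 - 2 / 2^k) * s) := by
  have i0 : Function.Injective (fun n : ℕ => 2 * n) := fun a b h => by simpa using h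
  have hE := (h.summable.comp_injective i0).hasSum
  have hO : HasSum (fun n : ℕ => 1 / (((2 * n + 1 : ℕ):ℝ) + 1)^k) (s / 2^k) := by
    refine (h.div_const (2^k)).congr_fun ?_ |> fun h => h
    intro n
    push_cast
    rw [show (2:ℝ) * n + 1 + 1 = 2 * (n + 1) by ring, mul_pow]
    rw [div_div]; congr 1; ring
  have hs := h.unique (HasSum.even_add_odd hE hO)
  have : HasSum (fun n : ℕ => (-1:ℝ)^n / ((n:ℝ) + 1)^k) ((∑' n : ℕ, 1 / (((2 * n : ℕ):ℝ) + 1)^k) + -(s / 2^k)) := by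
    refine HasSum.even_add_odd ?_ ?_
    · refine hE.congr_fun ?_ |> fun h => h
      intro n; simp
    · refine hO.neg.congr_fun ?_ |> fun h => h
      intro n; simp [pow_succ, neg_div]
  convert this using 1
  have hs' : s = (∑' n : ℕ, 1 / (((2 * n : ℕ):ℝ) + 1)^k) + s / 2^k := hs
  linear_combination hs'

def H2 (N : ℕ) : ℝ := ∑ n ∈ Finset.range N, 1 / ((n:ℝ) + 1)^2

lemma z2 : HasSum (fun n : ℕ => 1 / ((n:ℝ) + 1)^2) (Real.pi^2 / 6) := by
  have := (hasSum_nat_add_iff' 1).mpr hasSum_zeta_two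
  simpa using this

lemma S_tendsto : Tendsto (fun N : ℕ => ∑ n ∈ Finset.range N, (-1:ℝ)^n / (n + 1) * (Real.pi^2 / 6 - H2 (n+1)))
    atTop (𝓝 (Real.pi^2 / 4 * Real.log 2 - Z3)) := by
  have hs : Summable (fun x : ℕ × ℕ => (-1:ℝ)^(x.1 + x.2) * tt x) := by
    refine Summable.of_norm_bounded tt_summable (fun x => ?_)
    simp [abs_of_nonneg (show 0 ≤ tt x by unfold tt; positivity)]
  have hB := hs.hasSum.prod_fiberwise fiber
  rw [tt_alt] at hB
  have hC : HasSum (fun j : ℕ => AA j / ((j:ℝ) + 1)^2) (Real.pi^2 / 4 * Real.log 2 - Z3) := by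
    have := (((z2.add (alt_hasSum 2 z2)).mul_left (Real.log 2)).sub hB).sub (alt_hasSum 3 zeta3_summable.hasSum)
    have e0 : Real.pi ^ 2 / 4 * Real.log 2 - Z3 =
      Real.log 2 * (Real.pi ^ 2 / 6 + (1 - 2 / 2 ^ 2) * (Real.pi ^ 2 / 6)) - Z3 / 4 -
      (1 - 2 / 2 ^ 3) * ∑' (b : ℕ), 1 / ((b:ℝ) + 1) ^ 3 := by unfold Z3; ring
    rw [e0]
    refine this.congr_fun ?_ |> fun h => h
    · intro j
      have e1 : AA (j + 1) = AA j + (-1:ℝ)^j / (j + 1) := by simp [AA, Finset.sum_range_succ]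
      rw [e1]
      have : (0:ℝ) < j + 1 := by positivity
      field_simp
      ring
  have e : ∀ N : ℕ, ∑ n ∈ Finset.range N, (-1:ℝ)^n / (n + 1) * (Real.pi^2 / 6 - H2 (n+1)) =
      AA N * (Real.pi^2 / 6 - H2 N) + ∑ j ∈ Finset.range N, AA j / ((j:ℝ) + 1)^2 := by
    intro N
    induction N with
    | zero => simp [AA]
    | succ N ih =>
      rw [Finset.sum_range_succ, ih, Finset.sum_range_succ]
      have e1 : AA (N + 1) = AA N + (-1:ℝ)^N / (N + 1) := by simp [AA, Finset.sum_range_succ]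
      have e2 : H2 (N + 1) = H2 N + 1 / ((N:ℝ) + 1)^2 := by simp [H2, Finset.sum_range_succ]
      rw [e1, e2]; ring
  simp only [e]
  have := (AA_tendsto.mul (z2.tendsto_sum_nat.const_sub (Real.pi^2/6))).add hC.tendsto_sum_nat
  simpa [H2] using this

def WW (n : ℕ) : ℝ := ∫ y in (0:ℝ)..1, (1 - y^2)^n
def JJ (n : ℕ) : ℝ := ∫ x in (0:ℝ)..(Real.pi/2), Real.cos x ^ (2*n)
def II (n : ℕ) : ℝ := ∫ x in (0:ℝ)..(Real.pi/2), x^2 * Real.cos x ^ (2*n)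

lemma ftc {E E' : ℝ → ℝ} {a b : ℝ} (h : ∀ x, HasDerivAt E (E' x) x) (hc : Continuous E') :
    ∫ x in a..b, E' x = E b - E a :=
  intervalIntegral.integral_eq_sub_of_hasDerivAt (fun x _ => h x) (hc.intervalIntegrable _ _)

lemma WW_succ (n : ℕ) : (2 * (n:ℝ) + 3) * WW (n+1) = (2 * n + 2) * WW n := by
  have h := ftc (E := fun y : ℝ => y * (1 - y^2)^(n+1))
    (E' := fun y => (2 * (n:ℝ) + 3) * (1 - y^2)^(n+1) - (2 * n + 2) * (1 - y^2)^n) (a := 0) (b := 1)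
    (fun x => by
      have h1 : HasDerivAt (fun y : ℝ => 1 - y^2) (-(2 * x)) x := by
        have := (hasDerivAt_pow 2 x).const_sub 1
        simpa using this
      have := (hasDerivAt_id x).mul (h1.pow (n+1))
      refine HasDerivAt.congr_deriv this ?_
      simp
      ring) (by fun_prop)
  rw [intervalIntegral.integral_sub ((by fun_prop : Continuous _).intervalIntegrable _ _) ((by fun_prop : Continuous _).intervalIntegrable _ _),
    intervalIntegral.integral_const_mul, intervalIntegral.integral_const_mul] at h
  simp at h
  unfold WW
  linarith

lemma cosd (n : ℕ) (x : ℝ) : HasDerivAt (fun x => Real.cos x ^ (2*n+1) * Real.sin x)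
    ((2 * (n:ℝ) + 2) * Real.cos x ^ (2*(n+1)) - (2 * n + 1) * Real.cos x ^ (2 * n)) x := by
  have := ((Real.hasDerivAt_cos x).pow (2*n+1)).mul (Real.hasDerivAt_sin x)
  refine HasDerivAt.congr_deriv this ?_
  have h := Real.sin_sq_add_cos_sq x
  have h' : Real.sin x ^ 2 = 1 - Real.cos x ^2 := by linarith
  simp only [Nat.add_sub_cancel, Pi.pow_apply]
  push_cast
  linear_combination -(2 * (n:ℝ) + 1) * Real.cos x ^ (2*n) * h'

lemma JJ_succ (n : ℕ) : (2 * (n:ℝ) + 2) * JJ (n+1) = (2 * n + 1) * JJ n := by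
  have h := ftc (a := 0) (b := Real.pi/2) (cosd n) (by fun_prop)
  rw [intervalIntegral.integral_sub ((by fun_prop : Continuous _).intervalIntegrable _ _) ((by fun_prop : Continuous _).intervalIntegrable _ _),
    intervalIntegral.integral_const_mul, intervalIntegral.integral_const_mul] at h
  simp at h
  unfold JJ
  linarith

lemma II_succ (n : ℕ) : (2 * (n:ℝ) + 2)^2 * II (n+1) = (2 * n + 2) * (2 * n + 1) * II n - 2 * JJ (n+1) := by
  have h := ftc (a := 0) (b := Real.pi/2)
    (E := fun x => (2 * (n:ℝ) + 2) * (x^2 * (Real.cos x ^ (2*n+1) * Real.sin x)) + 2 * (x * Real.cos x ^ (2*(n+1))))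
    (E' := fun x => (2 * (n:ℝ) + 2)^2 * (x^2 * Real.cos x ^ (2*(n+1))) - (2 * n + 2) * (2 * n + 1) * (x^2 * Real.cos x ^ (2*n))
      + 2 * Real.cos x ^ (2 * (n+1)))
    (fun x => by
      have := (((hasDerivAt_pow 2 x).mul (cosd n x)).const_mul (2 * (n:ℝ) + 2)).add
        (((hasDerivAt_id x).mul ((Real.hasDerivAt_cos x).pow (2*(n+1)))).const_mul 2)
      refine HasDerivAt.congr_deriv this ?_
      simp only [Pi.pow_apply, id]
      rw [show 2 * (n+1) - 1 = 2 * n + 1 by omega]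
      push_cast
      ring) (by fun_prop)
  rw [intervalIntegral.integral_add ((by fun_prop : Continuous _).intervalIntegrable _ _) ((by fun_prop : Continuous _).intervalIntegrable _ _),
    intervalIntegral.integral_sub ((by fun_prop : Continuous _).intervalIntegrable _ _) ((by fun_prop : Continuous _).intervalIntegrable _ _),
    intervalIntegral.integral_const_mul, intervalIntegral.integral_const_mul, intervalIntegral.integral_const_mul] at h
  simp at h
  unfold JJ II
  linarith

lemma II_eq (n : ℕ) : II n = JJ n * (Real.pi^2 / 12 - H2 n / 2) := by
  induction n with
  | zero => simp [II, JJ, H2, integral_pow]; ring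
  | succ n ih =>
    have h1 := II_succ n
    have h2 := JJ_succ n
    have e2 : H2 (n + 1) = H2 n + 1 / ((n:ℝ) + 1)^2 := by simp [H2, Finset.sum_range_succ]
    rw [ih] at h1
    have hn : (0:ℝ) < n + 1 := by positivity
    have : (2 * (n:ℝ) + 2)^2 ≠ 0 := by positivity
    apply mul_left_cancel₀ this
    rw [h1, e2]
    field_simp
    linear_combination (-(4 * (n:ℝ) + 4) * (Real.pi^2 - 6 * H2 n)) * h2 / 2

lemma WJ (n : ℕ) : WW n * JJ (n+1) = Real.pi / (4 * (n + 1)) := by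
  induction n with
  | zero =>
    have h := JJ_succ 0
    have : JJ 0 = Real.pi / 2 := by simp [JJ]
    rw [this] at h
    have w : WW 0 = 1 := by simp [WW]
    rw [w]; push_cast at h ⊢; linarith
  | succ n ih =>
    have h1 := WW_succ n
    have h2 := JJ_succ (n+1)
    have hn : (0:ℝ) < n + 1 := by positivity
    have hn3 : (0:ℝ) < 2 * n + 3 := by positivity
    have hn2 : (0:ℝ) < n + 2 := by positivity
    push_cast at h2 ⊢
    have w : WW (n+1) = (2 * n + 2) * WW n / (2 * n + 3) := by
      rw [eq_div_iff hn3.ne']; linarith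
    have j : JJ (n+1+1) = (2 * n + 3) * JJ (n+1) / (2 * n + 4) := by
      rw [eq_div_iff (by positivity)]; linarith
    rw [w, j]
    have : (2 * (n:ℝ) + 2) * WW n / (2 * n + 3) * ((2 * n + 3) * JJ (n+1) / (2 * n + 4)) =
      (WW n * JJ (n+1)) * ((2 * n + 2) / (2 * n + 4)) := by field_simp
    rw [this, ih]
    field_simp
    ring

def GG (s : ℝ) : ℝ := s * Real.arsinh s / √(1 + s^2)

lemma GG_int (s : ℝ) : GG s = ∫ y in (0:ℝ)..1, s^2 * (1 / (1 + s^2 * (1 - y^2))) := by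
  set c := √(1 + s^2) with hc
  have hc2 : c^2 = 1 + s^2 := Real.sq_sqrt (by positivity)
  have hc0 : 0 < c := Real.sqrt_pos.mpr (by positivity)
  have hcs : |s| < c := by
    apply Real.lt_sqrt_of_sq_lt; rw [sq_abs]; linarith
  have hcs' := abs_lt.mp hcs
  have pos : ∀ y ∈ Set.uIcc (0:ℝ) 1, 0 < c + s * y ∧ 0 < c - s * y := by
    intro y hy
    rw [Set.uIcc_of_le zero_le_one] at hy
    constructor <;> nlinarith [hy.1, hy.2]
  have h := intervalIntegral.integral_eq_sub_of_hasDerivAt (a := 0) (b := 1)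
    (f := fun y => s / (2 * c) * (Real.log (c + s * y) - Real.log (c - s * y)))
    (f' := fun y => s^2 * (1 / (1 + s^2 * (1 - y^2)))) (fun y hy => by
      obtain ⟨p1, p2⟩ := pos y hy
      have d1 : HasDerivAt (fun y => c + s * y) s y := by
        simpa using ((hasDerivAt_id y).const_mul s).const_add c
      have d2 : HasDerivAt (fun y => c - s * y) (-s) y := by
        simpa using ((hasDerivAt_id y).const_mul s).const_sub c
      have := ((d1.log p1.ne').sub (d2.log p2.ne')).const_mul (s / (2 * c))
      refine HasDerivAt.congr_deriv this ?_
      have e : 1 + s^2 * (1 - y^2) = (c + s * y) * (c - s * y) := by linear_combination -hc2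
      rw [e]
      field_simp
      ring) (by
      apply ContinuousOn.intervalIntegrable
      intro y hy
      obtain ⟨p1, p2⟩ := pos y hy
      have e : 1 + s^2 * (1 - y^2) = (c + s * y) * (c - s * y) := by linear_combination -hc2
      have : 1 + s^2 * (1 - y^2) ≠ 0 := by rw [e]; positivity
      exact ContinuousAt.continuousWithinAt (by fun_prop (disch := assumption)))
  rw [h]
  have p1 : 0 < c + s := by linarith
  have e : c - s = (c + s)⁻¹ := by
    apply eq_inv_of_mul_eq_one_left; linear_combination hc2
  simp only [mul_one, mul_zero, add_zero, sub_zero, sub_self]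
  rw [e, Real.log_inv]
  unfold GG Real.arsinh
  rw [← hc, add_comm s c]
  field_simp
  ring

lemma GG_bound (s : ℝ) (N : ℕ) :
    |GG s - ∑ n ∈ Finset.range N, (-1)^n * WW n * s^(2*n+2)| ≤ WW N * s^(2*N+2) := by
  have e : ∑ n ∈ Finset.range N, (-1)^n * WW n * s^(2*n+2) =
      ∫ y in (0:ℝ)..1, ∑ n ∈ Finset.range N, s^2 * (-(s^2 * (1 - y^2)))^n := by
    rw [intervalIntegral.integral_finsetSum (fun n _ => (by fun_prop : Continuous _).intervalIntegrable _ _)]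
    refine Finset.sum_congr rfl fun n _ => ?_
    have : ∀ y : ℝ, s^2 * (-(s^2 * (1 - y^2)))^n = ((-1)^n * s^(2*n+2)) * (1 - y^2)^n := fun y => by
      rw [neg_pow, mul_pow, ← pow_mul]; ring
    simp only [this, intervalIntegral.integral_const_mul]
    unfold WW; ring
  have e2 : WW N * s^(2*N+2) = ∫ y in (0:ℝ)..1, s^2 * (s^2 * (1 - y^2))^N := by
    have : ∀ y : ℝ, s^2 * (s^2 * (1 - y^2))^N = (s^(2*N+2)) * (1 - y^2)^N := fun y => by
      rw [mul_pow, ← pow_mul]; ring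
    simp only [this, intervalIntegral.integral_const_mul]
    unfold WW; ring
  have nn : ∀ y ∈ Set.uIcc (0:ℝ) 1, 0 ≤ s^2 * (1 - y^2) := by
    intro y hy
    rw [Set.uIcc_of_le zero_le_one] at hy
    have : 0 ≤ 1 - y^2 := by nlinarith [hy.1, hy.2]
    positivity
  rw [GG_int, e, e2, ← intervalIntegral.integral_sub]
  · refine intervalIntegral.norm_integral_le_of_norm_le (E := ℝ) (μ := MeasureTheory.volume) (g := fun y => s^2 * (s^2 * (1 - y^2))^N) zero_le_one ?_ ((by fun_prop : Continuous _).intervalIntegrable _ _)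
    filter_upwards with y hy
    rw [← Finset.mul_sum, ← mul_sub, Real.norm_eq_abs, abs_mul, abs_of_nonneg (sq_nonneg s)]
    have := geo_rem (s^2 * (1 - y^2)) (nn y (by rw [Set.uIcc_of_le zero_le_one]; exact ⟨hy.1.le, hy.2⟩)) N
    gcongr
  · apply ContinuousOn.intervalIntegrable
    intro y hy
    have : 1 + s^2 * (1 - y^2) ≠ 0 := by have := nn y hy; positivity
    exact ContinuousAt.continuousWithinAt (by fun_prop (disch := assumption))
  · exact (by fun_prop : Continuous _).intervalIntegrable _ _

lemma GG_cont : Continuous GG := by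
  unfold GG
  have h : ∀ s : ℝ, √(1 + s^2) ≠ 0 := fun s => (Real.sqrt_pos.mpr (by positivity)).ne'
  have := Real.continuous_arsinh
  fun_prop (disch := exact h _)

lemma V_eq : ∫ x in (0:ℝ)..(Real.pi/2), x^2 * GG (Real.cos x) =
    Real.pi / 8 * (Real.pi^2 / 4 * Real.log 2 - Z3) := by
  have hGc := GG_cont
  have term : ∀ n : ℕ, WW n * II (n+1) = Real.pi / 8 * (1 / ((n:ℝ) + 1) * (Real.pi^2 / 6 - H2 (n+1))) := by
    intro n
    rw [II_eq, ← mul_assoc, WJ]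
    have hn : (0:ℝ) < n + 1 := by positivity
    field_simp
    ring
  have bound : ∀ N : ℕ, |(∫ x in (0:ℝ)..(Real.pi/2), x^2 * GG (Real.cos x)) -
      Real.pi / 8 * ∑ n ∈ Finset.range N, (-1:ℝ)^n / (n + 1) * (Real.pi^2 / 6 - H2 (n+1))| ≤
      Real.pi / 8 * (1 / ((N:ℝ) + 1) * (Real.pi^2 / 6 - H2 (N+1))) := by
    intro N
    have e : Real.pi / 8 * ∑ n ∈ Finset.range N, (-1:ℝ)^n / (n + 1) * (Real.pi^2 / 6 - H2 (n+1)) =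
       ∫ x in (0:ℝ)..(Real.pi/2), ∑ n ∈ Finset.range N, x^2 * ((-1)^n * WW n * (Real.cos x)^(2*n+2)) := by
      rw [intervalIntegral.integral_finsetSum (fun n _ => (by fun_prop : Continuous _).intervalIntegrable _ _), Finset.mul_sum]
      refine Finset.sum_congr rfl fun n _ => ?_
      have : ∀ x : ℝ, x^2 * ((-1)^n * WW n * (Real.cos x)^(2*n+2)) = ((-1)^n * WW n) * (x^2 * (Real.cos x)^(2*(n+1))) := fun x => by
        ring
      simp only [this, intervalIntegral.integral_const_mul]
      have t := term n
      unfold II at t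
      rw [mul_assoc ((-1)^n), t]; ring
    have e2 : Real.pi / 8 * (1 / ((N:ℝ) + 1) * (Real.pi^2 / 6 - H2 (N+1))) =
       ∫ x in (0:ℝ)..(Real.pi/2), x^2 * (WW N * (Real.cos x)^(2*N+2)) := by
      rw [← term]
      have : ∀ x : ℝ, x^2 * (WW N * (Real.cos x)^(2*N+2)) = WW N * (x^2 * (Real.cos x)^(2*(N+1))) := fun x => by
        ring
      simp only [this, intervalIntegral.integral_const_mul]
      rfl
    rw [e, e2, ← intervalIntegral.integral_sub ((by fun_prop : Continuous _).intervalIntegrable _ _) ((by fun_prop : Continuous _).intervalIntegrable _ _)]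
    refine intervalIntegral.norm_integral_le_of_norm_le (E := ℝ) (μ := MeasureTheory.volume) (g := fun x => x^2 * (WW N * (Real.cos x)^(2*N+2))) (by linarith [Real.pi_pos] : (0:ℝ) ≤ Real.pi / 2) ?_ ((by fun_prop : Continuous _).intervalIntegrable _ _)
    filter_upwards with x hx
    rw [← Finset.mul_sum, ← mul_sub, Real.norm_eq_abs, abs_mul, abs_of_nonneg (sq_nonneg x)]
    have := GG_bound (Real.cos x) N
    gcongr
  have h0 : Tendsto (fun N : ℕ => Real.pi / 8 * (1 / ((N:ℝ) + 1) * (Real.pi^2 / 6 - H2 (N+1)))) atTop (𝓝 0) := by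
    have := (tendsto_one_div_add_atTop_nhds_zero_nat (𝕜 := ℝ)).mul (((z2.tendsto_sum_nat).comp (tendsto_add_atTop_nat 1)).const_sub (Real.pi^2/6))
    have := this.const_mul (Real.pi / 8)
    simpa [H2] using this
  have hlim := S_tendsto.const_mul (Real.pi / 8)
  refine tendsto_nhds_unique ?_ hlim
  rw [tendsto_iff_dist_tendsto_zero]
  refine squeeze_zero (fun _ => dist_nonneg) (fun N => ?_) h0
  rw [dist_comm]
  exact bound N

def f1 (t : ℝ) : ℝ := 4 * t / (1 + t^4)
def f2 (t : ℝ) : ℝ := 2 * √2 * (t^2 - 1) / (1 + t^4)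
def f3 (t : ℝ) : ℝ := 2 * √2 * (t^2 + 1) / (1 + t^4)

lemma den_ne (t : ℝ) : 1 + t^4 ≠ 0 := by positivity

lemma f1_cont : Continuous f1 := by unfold f1; fun_prop (disch := exact den_ne)
lemma f2_cont : Continuous f2 := by unfold f2; fun_prop (disch := exact den_ne)
lemma f3_cont : Continuous f3 := by unfold f3; fun_prop (disch := exact den_ne)

lemma p1_val : p₁ = (√2 : ℂ) / 2 + (√2 : ℂ) / 2 * Complex.I := by
  unfold p₁
  have : Complex.I * ((Real.pi : ℂ) / 4) = ((Real.pi / 4 : ℝ) : ℂ) * Complex.I := by push_cast; ring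
  rw [this, Complex.exp_mul_I, ← Complex.ofReal_cos, ← Complex.ofReal_sin, Real.cos_pi_div_four, Real.sin_pi_div_four]
  push_cast; ring

lemma p1_inv : Complex.exp (-(Complex.I * ((Real.pi : ℂ) / 4))) = (√2 : ℂ) / 2 - (√2 : ℂ) / 2 * Complex.I := by
  have : -(Complex.I * ((Real.pi : ℂ) / 4)) = ((-(Real.pi / 4) : ℝ) : ℂ) * Complex.I := by push_cast; ring
  rw [this, Complex.exp_mul_I, ← Complex.ofReal_cos, ← Complex.ofReal_sin, Real.cos_neg, Real.sin_neg, Real.cos_pi_div_four, Real.sin_pi_div_four]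
  push_cast; ring

lemma sqrt2C : (√2 : ℂ)^2 = 2 := by
  rw [← Complex.ofReal_pow, Real.sq_sqrt (by norm_num)]; norm_num

lemma p1_sq : p₁^2 = Complex.I := by
  rw [p1_val]
  linear_combination (Complex.I / 2 + (1 + Complex.I^2)/4) * sqrt2C + (1/2) * Complex.I_sq

lemma p2_eq : p₂ = p₁^3 := by
  rw [pow_succ, p1_sq, p1_val]
  unfold p₂
  rw [p1_inv]
  linear_combination (-(√2:ℂ)/2) * Complex.I_sq

lemma pole (t q : ℂ) (hq : q^4 = -1) (ht : 1 + t^4 ≠ 0) :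
    1 / (t - q) = (t^3 + t^2 * q + t * q^2 + q^3) / (1 + t^4) := by
  have h : (t - q) * (t^3 + t^2 * q + t * q^2 + q^3) = 1 + t^4 := by linear_combination -hq
  have : t - q ≠ 0 := by
    intro h0; rw [h0, zero_mul] at h; exact ht h.symm
  rw [div_eq_div_iff this ht]; linear_combination -h

lemma p1_four : p₁^4 = -1 := by
  rw [show p₁^4 = (p₁^2)^2 by ring, p1_sq, Complex.I_sq]

lemma denC (t : ℝ) : (1 + (t:ℂ)^4) ≠ 0 := by exact_mod_cast den_ne t

lemma poles (t : ℝ) :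
    1 / ((t:ℂ) - p₁) = (t^3 + t^2 * p₁ + t * p₁^2 + p₁^3) / (1 + (t:ℂ)^4) ∧
    1 / ((t:ℂ) - p₂) = (t^3 + t^2 * p₁^3 - t * p₁^2 + p₁) / (1 + (t:ℂ)^4) ∧
    1 / ((t:ℂ) - p₃) = (t^3 - t^2 * p₁ + t * p₁^2 - p₁^3) / (1 + (t:ℂ)^4) ∧
    1 / ((t:ℂ) - p₄) = (t^3 - t^2 * p₁^3 - t * p₁^2 - p₁) / (1 + (t:ℂ)^4) := by
  have h := p1_four
  have h6 : p₁^6 = -p₁^2 := by linear_combination p₁^2 * h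
  have h9 : p₁^9 = p₁ := by linear_combination (p₁^5 - p₁) * h
  have h12 : p₁^12 = -1 := by linear_combination (p₁^8 - p₁^4 + 1) * h
  refine ⟨pole _ _ h (denC t), ?_, ?_, ?_⟩
  · rw [pole _ _ (by rw [p2_eq]; linear_combination h12) (denC t), p2_eq]
    congr 1; linear_combination t * h6 + h9
  · rw [pole _ _ (by unfold p₃; linear_combination h) (denC t)]; unfold p₃
    congr 1; ring
  · rw [pole _ _ (by unfold p₄; rw [p2_eq]; linear_combination h12) (denC t)]; unfold p₄; rw [p2_eq]
    congr 1; linear_combination t * h6 - h9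

lemma p1_cube : p₁^3 = -((√2 : ℂ) / 2) + (√2 : ℂ) / 2 * Complex.I := by
  rw [← p2_eq]; unfold p₂; rw [p1_inv]; ring

lemma F1_eq (t : ℝ) : F₁ (t:ℂ) = Complex.I * (f1 t : ℝ) := by
  obtain ⟨h1, h2, h3, h4⟩ := poles t
  unfold F₁ f1
  rw [h1, h2, h3, h4, p1_sq]
  push_cast
  ring

lemma F2_eq (t : ℝ) : F₂ (t:ℂ) = (f2 t : ℝ) := by
  obtain ⟨h1, h2, h3, h4⟩ := poles t
  unfold F₂ f2
  rw [h1, h2, h3, h4, p1_sq, p1_cube, p1_val]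
  push_cast
  ring

lemma F3_eq (t : ℝ) : F₃ (t:ℂ) = Complex.I * (f3 t : ℝ) := by
  obtain ⟨h1, h2, h3, h4⟩ := poles t
  unfold F₃ f3
  rw [h1, h2, h3, h4, p1_sq, p1_cube, p1_val]
  push_cast
  ring

def a1 (z : ℝ) : ℝ := ∫ t in (0:ℝ)..z, f2 t
def a2 (z : ℝ) : ℝ := ∫ t in (0:ℝ)..z, a1 t * f1 t
def a3 (z : ℝ) : ℝ := ∫ t in (0:ℝ)..z, a2 t * f3 t
def a4 (z : ℝ) : ℝ := ∫ t in (0:ℝ)..z, a3 t * f3 t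

lemma a1_d (z : ℝ) : HasDerivAt a1 (f2 z) z := (f2_cont.integral_hasStrictDerivAt 0 z).hasDerivAt
lemma a1_cont : Continuous a1 := continuous_iff_continuousAt.mpr fun z => (a1_d z).continuousAt
lemma a2_d (z : ℝ) : HasDerivAt a2 (a1 z * f1 z) z :=
  ((a1_cont.mul f1_cont).integral_hasStrictDerivAt 0 z).hasDerivAt
lemma a2_cont : Continuous a2 := continuous_iff_continuousAt.mpr fun z => (a2_d z).continuousAt
lemma a3_d (z : ℝ) : HasDerivAt a3 (a2 z * f3 z) z :=
  ((a2_cont.mul f3_cont).integral_hasStrictDerivAt 0 z).hasDerivAt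
lemma a3_cont : Continuous a3 := continuous_iff_continuousAt.mpr fun z => (a3_d z).continuousAt
lemma a4_d (z : ℝ) : HasDerivAt a4 (a3 z * f3 z) z :=
  ((a3_cont.mul f3_cont).integral_hasStrictDerivAt 0 z).hasDerivAt

lemma Omega_eq : Omega [F₂, F₁, F₃, F₃] 1 = -Complex.I * (a4 1 : ℝ) := by
  have e0 : Omega [F₂, F₁, F₃, F₃] 1 = ∫ t in (0:ℝ)..1, (∫ s in (0:ℝ)..t, (∫ r in (0:ℝ)..s,
    (∫ q in (0:ℝ)..r, (1:ℂ) * F₂ q) * F₁ r) * F₃ s) * F₃ t := rfl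
  have e1 : ∀ r : ℝ, (∫ q in (0:ℝ)..r, (1:ℂ) * F₂ q) = (a1 r : ℝ) := by
    intro r
    simp only [F2_eq, one_mul, intervalIntegral.integral_ofReal, a1]
  have e2 : ∀ s : ℝ, (∫ r in (0:ℝ)..s, ((a1 r : ℝ):ℂ) * F₁ r) = Complex.I * (a2 s : ℝ) := by
    intro s
    have : ∀ r : ℝ, ((a1 r : ℝ):ℂ) * F₁ r = Complex.I * ((a1 r * f1 r : ℝ) : ℂ) := by
      intro r; rw [F1_eq]; push_cast; ring
    simp only [this, intervalIntegral.integral_const_mul, intervalIntegral.integral_ofReal, a2]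
  have e3 : ∀ s : ℝ, (∫ r in (0:ℝ)..s, (Complex.I * ((a2 r : ℝ):ℂ)) * F₃ r) = -1 * (a3 s : ℝ) := by
    intro s
    have : ∀ r : ℝ, (Complex.I * ((a2 r : ℝ):ℂ)) * F₃ r = -1 * ((a2 r * f3 r : ℝ) : ℂ) := by
      intro r; rw [F3_eq]; push_cast
      linear_combination ((a2 r : ℝ):ℂ) * (f3 r : ℝ) * Complex.I_sq
    simp only [this, intervalIntegral.integral_const_mul, intervalIntegral.integral_ofReal, a3]
  have e4 : ∀ s : ℝ, (∫ r in (0:ℝ)..s, (-1 * ((a3 r : ℝ):ℂ)) * F₃ r) = -Complex.I * (a4 s : ℝ) := by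
    intro s
    have : ∀ r : ℝ, (-1 * ((a3 r : ℝ):ℂ)) * F₃ r = -Complex.I * ((a3 r * f3 r : ℝ) : ℂ) := by
      intro r; rw [F3_eq]; push_cast; ring
    simp only [this, intervalIntegral.integral_const_mul, intervalIntegral.integral_ofReal, a4]
  rw [e0]
  simp only [e1, e2, e3, e4]

lemma s2 : √2 ^ 2 = (2:ℝ) := Real.sq_sqrt (by norm_num)

lemma P_pos (z : ℝ) : 0 < z^2 + √2 * z + 1 := by nlinarith [s2, sq_nonneg (z + √2/2)]
lemma Q_pos (z : ℝ) : 0 < z^2 - √2 * z + 1 := by nlinarith [s2, sq_nonneg (z - √2/2)]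
lemma PQ (z : ℝ) : (z^2 + √2 * z + 1) * (z^2 - √2 * z + 1) = 1 + z^4 := by
  linear_combination -z^2 * s2

lemma a1_eq (z : ℝ) : a1 z = Real.log (z^2 - √2 * z + 1) - Real.log (z^2 + √2 * z + 1) := by
  unfold a1
  rw [ftc (E := fun z => Real.log (z^2 - √2 * z + 1) - Real.log (z^2 + √2 * z + 1)) _ f2_cont]
  · simp
  intro x
  have d1 : HasDerivAt (fun x : ℝ => x^2 - √2 * x + 1) (2 * x - √2) x := by
    have := (((hasDerivAt_pow 2 x).sub ((hasDerivAt_id x).const_mul √2))).add_const 1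
    simpa using this
  have d2 : HasDerivAt (fun x : ℝ => x^2 + √2 * x + 1) (2 * x + √2) x := by
    have := (((hasDerivAt_pow 2 x).add ((hasDerivAt_id x).const_mul √2))).add_const 1
    simpa using this
  refine HasDerivAt.congr_deriv ((d1.log (Q_pos x).ne').sub (d2.log (P_pos x).ne')) ?_
  unfold f2
  have := P_pos x
  have := Q_pos x
  rw [← PQ x, div_sub_div _ _ (Q_pos x).ne' (P_pos x).ne', mul_comm (x^2 + √2 * x + 1) (x^2 - √2 * x + 1)]
  congr 1
  ring

def ph (z : ℝ) : ℝ := Real.pi / 2 - (Real.arctan (√2 * z + 1) + Real.arctan (√2 * z - 1))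

lemma ph_d (z : ℝ) : HasDerivAt ph (-(f3 z) / 2) z := by
  have d1 : HasDerivAt (fun x : ℝ => √2 * x + 1) √2 z := by
    simpa using ((hasDerivAt_id z).const_mul √2).add_const 1
  have d2 : HasDerivAt (fun x : ℝ => √2 * x - 1) √2 z := by
    simpa using ((hasDerivAt_id z).const_mul √2).sub_const 1
  refine HasDerivAt.congr_deriv ((d1.arctan.add d2.arctan).const_sub (Real.pi/2)) ?_
  unfold f3
  have e1 : 1 + (√2 * z + 1)^2 = 2 * (z^2 + √2 * z + 1) := by linear_combination z^2 * s2
  have e2 : 1 + (√2 * z - 1)^2 = 2 * (z^2 - √2 * z + 1) := by linear_combination z^2 * s2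
  rw [e1, e2, ← PQ z]
  have hP := (P_pos z).ne'
  have hQ := (Q_pos z).ne'
  have e3 : z^2 + 1 = ((z^2 + √2 * z + 1) + (z^2 - √2 * z + 1)) / 2 := by ring
  rw [e3]
  generalize z^2 + √2 * z + 1 = P at *
  generalize z^2 - √2 * z + 1 = Q at *
  field_simp
  ring

lemma ph_zero : ph 0 = Real.pi / 2 := by
  unfold ph; simp [Real.arctan_neg, Real.arctan_one]

lemma ph_one : ph 1 = 0 := by
  unfold ph
  have h : √2 * 1 - 1 = (√2 * 1 + 1)⁻¹ := by
    apply eq_inv_of_mul_eq_one_left; linear_combination s2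
  rw [h, Real.arctan_inv_of_pos (by positivity)]; ring

lemma cos_ph (z : ℝ) : Real.cos (ph z) = √2 * z / √(1 + z^4) := by
  unfold ph
  rw [Real.cos_pi_div_two_sub, Real.sin_add, Real.sin_arctan, Real.sin_arctan, Real.cos_arctan, Real.cos_arctan]
  have e1 : 1 + (√2 * z + 1)^2 = 2 * (z^2 + √2 * z + 1) := by linear_combination z^2 * s2
  have e2 : 1 + (√2 * z - 1)^2 = 2 * (z^2 - √2 * z + 1) := by linear_combination z^2 * s2
  have hP := P_pos z
  have hQ := Q_pos z
  have e3 : √(1 + (√2 * z + 1)^2) * √(1 + (√2 * z - 1)^2) = 2 * √(1 + z^4) := by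
    rw [← Real.sqrt_mul (by positivity), e1, e2, ← PQ z,
      show 2 * (z^2 + √2 * z + 1) * (2 * (z^2 - √2 * z + 1)) = 2^2 * ((z^2 + √2 * z + 1) * (z^2 - √2 * z + 1)) by ring,
      Real.sqrt_mul (by positivity), Real.sqrt_sq (by norm_num)]
  have h4 : 0 < √(1 + z^4) := Real.sqrt_pos.mpr (by positivity)
  rw [div_mul_div_comm, div_mul_div_comm, e3, ← add_div]
  field_simp
  ring

lemma GG_ph (z : ℝ) : GG (Real.cos (ph z)) = -(√2 * z / (1 + z^2)) * a1 z / 2 := by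
  have h4 : 0 < √(1 + z^4) := Real.sqrt_pos.mpr (by positivity)
  have h4s : √(1 + z^4)^2 = 1 + z^4 := Real.sq_sqrt (by positivity)
  have hr : √(1 + (√2 * z / √(1 + z^4))^2) = (1 + z^2) / √(1 + z^4) := by
    rw [Real.sqrt_eq_iff_mul_self_eq (by positivity) (by positivity)]
    field_simp
    rw [h4s]
    linear_combination z^2 * s2
  have hP := P_pos z
  have hQ := Q_pos z
  have ha : Real.arsinh (√2 * z / √(1 + z^4)) = -(a1 z) / 2 := by
    unfold Real.arsinh
    rw [hr, ← add_div, show √2 * z + (1 + z^2) = z^2 + √2 * z + 1 by ring, Real.log_div hP.ne' h4.ne',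
      Real.log_sqrt (by positivity), ← PQ z, Real.log_mul hP.ne' hQ.ne', a1_eq]
    ring
  unfold GG
  rw [cos_ph, hr, ha]
  field_simp

lemma a4_eq : a4 1 = -Real.pi * (Real.pi^2 / 4 * Real.log 2 - Z3) := by
  have hph : Continuous ph := continuous_iff_continuousAt.mpr fun z => (ph_d z).continuousAt
  have c1 := a1_cont
  have c2 := f1_cont
  have c3 := f3_cont
  have h := ftc (a := 0) (b := 1) (E := fun z => a4 z + 2 * (a3 z * ph z) + 2 * (a2 z * ph z ^ 2))
    (E' := fun z => 2 * (a1 z * f1 z) * ph z ^ 2) (fun z => by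
      refine HasDerivAt.congr_deriv (((a4_d z).add (((a3_d z).mul (ph_d z)).const_mul 2)).add
        (((a2_d z).mul ((ph_d z).pow 2)).const_mul 2)) ?_
      simp only [Pi.pow_apply]
      push_cast
      ring) (by fun_prop)
  have z2' : a2 0 = 0 := by simp [a2]
  have z3' : a3 0 = 0 := by simp [a3]
  have z4' : a4 0 = 0 := by simp [a4]
  simp only [ph_one, z2', z3', z4'] at h
  have h' : a4 1 = ∫ z in (0:ℝ)..1, 2 * (a1 z * f1 z) * ph z ^ 2 := by rw [h]; ring
  have hG := GG_cont
  have sub := intervalIntegral.integral_comp_mul_deriv (a := 0) (b := 1) (f := ph) (f' := fun z => -(f3 z) / 2)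
    (g := fun x => x^2 * GG (Real.cos x)) (fun z _ => ph_d z) (by fun_prop) (by fun_prop)
  rw [ph_zero, ph_one, intervalIntegral.integral_symm 0 (Real.pi/2), V_eq] at sub
  have e : ∀ z : ℝ, 2 * (a1 z * f1 z) * ph z ^ 2 = 8 * (((fun x => x^2 * GG (Real.cos x)) ∘ ph) z * (-(f3 z) / 2)) := by
    intro z
    simp only [Function.comp, GG_ph, f1, f3]
    have := den_ne z
    have : 1 + z^2 ≠ 0 := by positivity
    field_simp
    rw [s2]
    ring
  rw [h']
  simp only [e, intervalIntegral.integral_const_mul, sub]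
  ring

lemma zeta3_eq : riemannZeta 3 = (Z3 : ℂ) := by
  have h := zeta_nat_eq_tsum_of_gt_one (k := 3) (by norm_num)
  have h3 : HasSum (fun n : ℕ => 1 / (n:ℝ)^3) Z3 := by
    rw [← hasSum_nat_add_iff' 1]
    simpa [Z3] using zeta3_summable.hasSum
  have h4 : ((∑' n : ℕ, 1 / (n:ℝ)^3 : ℝ) : ℂ) = ∑' n : ℕ, 1 / (n:ℂ)^3 := by push_cast; rfl
  rw [h3.tsum_eq] at h4
  rw [h4, ← h]; norm_num

/- STATEMENT 14: `Ω_{2,1,3,3} = (iπ³/4) log 2 - iπ ζ(3)`. -/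
theorem stmt_14 :
    Omega [F₂, F₁, F₃, F₃] 1 =
      Complex.I * (Real.pi : ℂ) ^ 3 / 4 * ((Real.log 2 : ℝ) : ℂ) -
        Complex.I * (Real.pi : ℂ) * riemannZeta 3 := by
  rw [Omega_eq, a4_eq, zeta3_eq]
  push_cast
  ring
end
end

section
/- With the notation of the iterated integrals Ω at φ = π/4, one has Ω_{2,2,2,1} = −(iπ³/12)·log 2 + (iπ/4)·ζ(3). -/
noncomputable section

open Set MeasureTheory Real

theorem aux_Z (k : ℕ) (hk : 1 ≤ k) :
    ((∫ x in Ioi (0:ℝ), x ^ k / (Real.exp x - 1) : ℝ) : ℂ) = (k.factorial : ℂ) * riemannZeta (k + 1) := by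
  have hkr : (1:ℝ) ≤ k := by exact_mod_cast hk
  have h := hasSum_mellin (ι := ℕ) (a := fun _ => 1) (p := fun n => (n:ℝ) + 1)
    (F := fun t => ((1 / (Real.exp t - 1) : ℝ) : ℂ)) (s := (k:ℂ) + 1)
    (fun i => Or.inr (by positivity)) (by simp; positivity) ?_ ?_
  · have h2 := h.tsum_eq
    rw [zeta_eq_tsum_one_div_nat_add_one_cpow (by simp; omega), ← Complex.Gamma_nat_eq_factorial, ← tsum_mul_left]
    have h3 : mellin (fun t : ℝ => ((1 / (Real.exp t - 1) : ℝ) : ℂ)) ((k:ℂ) + 1) = ((∫ x in Ioi (0:ℝ), x ^ k / (Real.exp x - 1) : ℝ) : ℂ) := by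
      rw [mellin, ← integral_complex_ofReal]
      apply setIntegral_congr_fun measurableSet_Ioi
      intro t ht
      simp [div_eq_mul_inv]
    rw [← h3, ← h2]
    congr 1
    ext n
    push_cast
    ring
  · intro t ht
    have ht' : (0:ℝ) < t := ht
    rw [show (fun i : ℕ => (1:ℂ) * (rexp (-((i:ℝ)+1) * t) : ℂ)) = fun i : ℕ => (((rexp (-((i:ℝ)+1) * t)) : ℝ) : ℂ) by simp]
    rw [Complex.hasSum_ofReal]
    have := (hasSum_geometric_of_lt_one (exp_pos (-t)).le (by simpa using ht')).mul_left (rexp (-t))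
    have e1 : (fun i : ℕ => rexp (-((i:ℝ)+1) * t)) = fun i : ℕ => rexp (-t) * rexp (-t) ^ i := by
      ext i
      rw [← Real.exp_nat_mul, ← Real.exp_add]; ring_nf
    have e2 : 1 / (rexp t - 1) = rexp (-t) * (1 - rexp (-t))⁻¹ := by
      have : rexp t - 1 ≠ 0 := by
        have := Real.add_one_lt_exp ht'.ne'
        linarith
      rw [Real.exp_neg]
      have h0 := exp_pos t
      have : 1 - (rexp t)⁻¹ ≠ 0 := by
        rw [sub_ne_zero]; intro h; apply this; field_simp at h; linarith
      field_simp
    rw [e1, e2]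
    exact this
  · simp only [norm_one, Complex.add_re, Complex.natCast_re, Complex.one_re]
    have := (summable_nat_add_iff 1).2 (Real.summable_one_div_nat_rpow (p := (k:ℝ)+1) |>.2 (by linarith))
    simpa using this

noncomputable def ZZ (k : ℕ) : ℝ := ∫ x in Ioi (0:ℝ), x ^ k / (Real.exp x - 1)

theorem ZZ_int (k : ℕ) (hk : 1 ≤ k) : IntegrableOn (fun x : ℝ => x ^ k / (Real.exp x - 1)) (Ioi 0) := by
  apply Integrable.of_integral_ne_zero
  intro h
  have := aux_Z k hk
  rw [h] at this
  have h2 : riemannZeta (k+1) ≠ 0 := riemannZeta_ne_zero_of_one_le_re (by simp)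
  have h3 : (k.factorial : ℂ) ≠ 0 := by exact_mod_cast k.factorial_ne_zero
  exact mul_ne_zero h3 h2 (by rw [← this]; simp)

theorem ZZ1 : ZZ 1 = π^2/6 := by
  have := aux_Z 1 le_rfl
  norm_num [riemannZeta_two] at this
  have h : ((ZZ 1 : ℝ) : ℂ) = ((π^2/6 : ℝ) : ℂ) := by
    simp only [ZZ]; push_cast; simpa using this
  exact_mod_cast h

theorem ZZ2 : (ZZ 2 : ℂ) = 2 * riemannZeta 3 := by
  have := aux_Z 2 (by norm_num)
  simp only [ZZ]
  rw [this]; norm_num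


theorem my_subst {s S : Set ℝ} {f f' g h : ℝ → ℝ} (ms : MeasurableSet s)
    (hd : ∀ x ∈ s, HasDerivAt f (f' x) x) (hi : InjOn f s) (him : f '' s = S)
    (hc : ∀ x ∈ s, |f' x| * g (f x) = h x) :
    ∫ x in S, g x = ∫ x in s, h x ∧ (IntegrableOn g S ↔ IntegrableOn h s) := by
  subst him
  constructor
  · rw [integral_image_eq_integral_abs_deriv_smul ms (fun x hx => (hd x hx).hasDerivWithinAt) hi]
    exact setIntegral_congr_fun ms hc
  · rw [integrableOn_image_iff_integrableOn_abs_deriv_smul ms (fun x hx => (hd x hx).hasDerivWithinAt) hi]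
    exact integrableOn_congr_fun hc ms

theorem lemA_s15 (k : ℕ) (hk : 1 ≤ k) :
    ∫ u in Ioo (0:ℝ) 1, (log (1-u))^k / u = (-1)^k * ZZ k ∧
      IntegrableOn (fun u : ℝ => (log (1-u))^k / u) (Ioo 0 1) := by
  have key := my_subst (s := Ioi 0) (S := Ioo 0 1) (f := fun x => 1 - rexp (-x)) (f' := fun x => rexp (-x))
    (g := fun u => (log (1-u))^k / u) (h := fun x => (-1)^k * (x ^ k / (Real.exp x - 1))) measurableSet_Ioi
    (fun x _ => by
      have := ((hasDerivAt_id x).neg.exp).const_sub 1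
      simpa using this)
    (fun x _ y _ h => by simpa using h)
    (by
      ext u; constructor
      · rintro ⟨x, hx, rfl⟩
        have hx' : (0:ℝ) < x := hx
        have : rexp (-x) < 1 := by simpa using hx'
        exact ⟨by simpa using hx', by have := exp_pos (-x); simp only; linarith⟩
      · rintro ⟨h0, h1⟩
        refine ⟨-log (1-u), ?_, ?_⟩
        · have : log (1-u) < 0 := log_neg (by linarith) (by linarith)
          simpa using this
        · simp only [neg_neg]; rw [exp_log (by linarith)]; ring)
    (fun x hx => by
      have hx' : (0:ℝ) < x := hx
      have h1 : rexp x - 1 ≠ 0 := by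
        have := Real.add_one_lt_exp hx'.ne'
        linarith
      have h0 := exp_pos x
      have h2 : 1 - (rexp x)⁻¹ ≠ 0 := by
        rw [sub_ne_zero]; intro h; apply h1; field_simp at h; linarith
      simp only [abs_of_pos (exp_pos (-x)), sub_sub_cancel, log_exp]
      rw [Real.exp_neg, neg_pow]
      field_simp)
  constructor
  · rw [key.1, integral_const_mul]; rfl
  · exact key.2.2 ((ZZ_int k hk).const_mul _)

theorem lemC (k : ℕ) (hk : 1 ≤ k) :
    ∫ u in Ioo (0:ℝ) 1, (log (1-u^2))^k / u = (-1)^k * ZZ k / 2 ∧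
      IntegrableOn (fun u : ℝ => (log (1-u^2))^k / u) (Ioo 0 1) := by
  have key := my_subst (s := Ioo 0 1) (S := Ioo 0 1) (f := fun x => x^2) (f' := fun x => 2*x)
    (g := fun u => (log (1-u))^k / u) (h := fun x => 2 * ((log (1-x^2))^k / x)) measurableSet_Ioo
    (fun x _ => by simpa using hasDerivAt_pow 2 x)
    (fun x hx y hy h => by
      exact (pow_left_inj₀ hx.1.le hy.1.le (by norm_num)).1 h)
    (by
      ext u; constructor
      · rintro ⟨x, ⟨h0, h1⟩, rfl⟩
        exact ⟨by positivity, by simp only; nlinarith⟩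
      · rintro ⟨h0, h1⟩
        refine ⟨√u, ⟨by positivity, ?_⟩, ?_⟩
        · rw [Real.sqrt_lt' (by norm_num)]; simpa using h1
        · simp only; rw [Real.sq_sqrt h0.le])
    (fun x hx => by
      have h0 := hx.1
      try simp only
      rw [abs_of_pos (by linarith)]
      field_simp)
  obtain ⟨hA, hA'⟩ := lemA_s15 k hk
  have h1 := key.1
  rw [hA, integral_const_mul] at h1
  refine ⟨by linarith, ?_⟩
  have := (key.2.1 hA').const_mul (1/2)
  simpa [IntegrableOn] using this

theorem lemD :
    ∫ u in Ioo (0:ℝ) 1, (log (1-u) - log (1+u))^2 / u = 7/4 * ZZ 2 ∧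
      IntegrableOn (fun u : ℝ => (log (1-u) - log (1+u))^2 / u) (Ioo 0 1) := by
  have key := my_subst (s := Ioi 0) (S := Ioo 0 1) (f := fun x => 2 / (1 + rexp (-x)) - 1)
    (f' := fun x => 2 * rexp (-x) / (1 + rexp (-x))^2)
    (g := fun u => (log (1-u) - log (1+u))^2 / u)
    (h := fun x => 2 * (x^2 / (rexp x - 1)) - 1/2 * ((2*x)^2 / (rexp (2*x) - 1))) measurableSet_Ioi
    (fun x _ => by
      have h0 := exp_pos (-x)
      have h1 := ((((hasDerivAt_id x).neg.exp).const_add 1).inv (by simp; positivity)).const_mul 2 |>.sub_const 1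
      convert! h1 using 1
      simp; field_simp)
    (fun x _ y _ h => by
      have h0 := exp_pos (-x)
      have h1 := exp_pos (-y)
      simp only [sub_left_inj] at h
      field_simp at h
      have : rexp (-x) = rexp (-y) := by linarith
      simpa using this)
    (by
      ext u; constructor
      · rintro ⟨x, hx, rfl⟩
        have hx' : (0:ℝ) < x := hx
        have : rexp (-x) < 1 := by simpa using hx'
        have h0 := exp_pos (-x)
        constructor
        · have : 1 < 2 / (1 + rexp (-x)) := by rw [lt_div_iff₀ (by positivity)]; linarith
          simp only; linarith
        · have : 2 / (1 + rexp (-x)) < 2 := by rw [div_lt_iff₀ (by positivity)]; linarith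
          simp only; linarith
      · rintro ⟨h0, h1⟩
        have hp : 0 < (1-u)/(1+u) := div_pos (by linarith) (by linarith)
        refine ⟨-log ((1-u)/(1+u)), ?_, ?_⟩
        · have : log ((1-u)/(1+u)) < 0 := log_neg hp (by rw [div_lt_one (by linarith)]; linarith)
          simpa using this
        · simp only [neg_neg]; rw [exp_log hp]; field_simp; ring)
    (fun x hx => by
      have hx' : (0:ℝ) < x := hx
      have h1 : 0 < rexp x - 1 := by
        have := Real.add_one_lt_exp hx'.ne'
        linarith
      have h0 := exp_pos x
      have hn := exp_pos (-x)
      try simp only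
      rw [abs_of_pos (by positivity), ← log_div, two_mul x, Real.exp_add]
      · have e : (1 - (2 / (1 + rexp (-x)) - 1)) / (1 + (2 / (1 + rexp (-x)) - 1)) = rexp (-x) := by
          field_simp; ring
        rw [e, log_exp, Real.exp_neg]
        have h3 : rexp x * rexp x - 1 ≠ 0 := by nlinarith
        have h4 : 2 / (1 + (rexp x)⁻¹) - 1 = (rexp x - 1) / (rexp x + 1) := by field_simp; ring
        rw [h4]
        have h5 : rexp x * rexp x - 1 = (rexp x - 1) * (rexp x + 1) := by ring
        rw [h5]
        have := h1.ne'
        field_simp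
        ring
      · have : 2 / (1 + rexp (-x)) < 2 := by rw [div_lt_iff₀ (by positivity)]; linarith
        linarith
      · have : 0 < 2 / (1 + rexp (-x)) := by positivity
        linarith)
  have hi := ZZ_int 2 (by norm_num)
  have hi2 : IntegrableOn (fun x : ℝ => ((2*x)^2 / (rexp (2*x) - 1))) (Ioi 0) := by
    have := (integrableOn_Ioi_comp_mul_left_iff (fun x : ℝ => x^2 / (rexp x - 1)) 0 (a := 2) (by norm_num)).2 (by simpa using hi)
    exact this
  have hv2 : ∫ x in Ioi (0:ℝ), ((2*x)^2 / (rexp (2*x) - 1)) = ZZ 2 / 2 := by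
    have := integral_comp_mul_left_Ioi (fun x : ℝ => x^2 / (rexp x - 1)) 0 (b := 2) (by norm_num)
    rw [this]; simp [ZZ]; ring
  refine ⟨?_, key.2.2 ((hi.const_mul 2).sub (hi2.const_mul _))⟩
  rw [key.1, integral_sub (hi.const_mul 2) (hi2.const_mul _), integral_const_mul, integral_const_mul, hv2]
  show 2 * ZZ 2 - _ = _
  ring

theorem lemB1 : ∫ u in Ioo (0:ℝ) 1, log (1+u) / u = π^2/12 ∧
      IntegrableOn (fun u : ℝ => log (1+u) / u) (Ioo 0 1) := by
  obtain ⟨hA, hA'⟩ := lemA_s15 1 le_rfl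
  obtain ⟨hC, hC'⟩ := lemC 1 le_rfl
  have hc : EqOn (fun u : ℝ => log (1+u) / u) (fun u => log (1-u^2)^1 / u - log (1-u)^1/u) (Ioo 0 1) := by
    intro u hu
    have h0 := hu.1
    have h1 := hu.2
    have : log (1-u^2) = log (1-u) + log (1+u) := by
      rw [← log_mul (by linarith) (by linarith)]; ring_nf
    simp only [this]; ring
  constructor
  · rw [setIntegral_congr_fun measurableSet_Ioo hc, integral_sub hC' hA', hC, hA, ZZ1]; ring
  · exact (integrableOn_congr_fun hc measurableSet_Ioo).2 (hC'.sub hA')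

theorem lemB2 : ∫ u in Ioo (0:ℝ) 1, log (1+u)^2 / u = ZZ 2 / 8 ∧
      IntegrableOn (fun u : ℝ => log (1+u)^2 / u) (Ioo 0 1) := by
  obtain ⟨hA, hA'⟩ := lemA_s15 2 (by norm_num)
  obtain ⟨hC, hC'⟩ := lemC 2 (by norm_num)
  obtain ⟨hD, hD'⟩ := lemD
  have hc : EqOn (fun u : ℝ => log (1+u)^2 / u) (fun u => 1/2 * (log (1-u^2)^2 / u) + 1/2 * ((log (1-u) - log (1+u))^2 / u) - log (1-u)^2/u) (Ioo 0 1) := by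
    intro u hu
    have h0 := hu.1
    have h1 := hu.2
    have : log (1-u^2) = log (1-u) + log (1+u) := by
      rw [← log_mul (by linarith) (by linarith)]; ring_nf
    simp only [this]; ring
  have i1 := hC'.const_mul (1/2)
  have i2 := hD'.const_mul (1/2)
  have i3 : Integrable (fun u : ℝ => 1/2 * (log (1-u^2)^2 / u) + 1/2 * ((log (1-u) - log (1+u))^2 / u)) (volume.restrict (Ioo 0 1)) := i1.add i2
  constructor
  · rw [setIntegral_congr_fun measurableSet_Ioo hc]
    rw [integral_sub i3 hA', integral_add i1 i2, integral_const_mul, integral_const_mul, hC, hA, hD]; ring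
  · exact (integrableOn_congr_fun hc measurableSet_Ioo).2 (i3.sub hA')

theorem lemG : ∫ t in (0:ℝ)..1, log (1-t/2) * log (2-t) / t = log 2 ^3 / 6 - π^2 * log 2 / 12 + ZZ 2 / 8 := by
  rw [intervalIntegral.integral_of_le (by norm_num), integral_Ioc_eq_integral_Ioo]
  have key := my_subst (s := Ioo 0 1) (S := Ioo 0 1) (f := fun x => 2 - 2/(1+x)) (f' := fun x => 2/(1+x)^2)
    (g := fun t => log (1-t/2) * log (2-t) / t)
    (h := fun x => log (1+x)^2/x - log 2 * (log (1+x)/x) + (log 2 * log (1+x) - log (1+x)^2)/(1+x)) measurableSet_Ioo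
    (fun x hx => by
      have h0 := hx.1
      have h1 := (((hasDerivAt_id x).const_add 1).inv (by simp; positivity)).const_mul 2 |>.const_sub 2
      convert! h1 using 1
      simp; field_simp)
    (fun x hx y hy h => by
      have h0 := hx.1
      have h1 := hy.1
      simp only [sub_right_inj] at h
      field_simp at h
      linarith)
    (by
      ext u; constructor
      · rintro ⟨x, ⟨h0, h1⟩, rfl⟩
        constructor
        · have : 2 / (1+x) < 2 := by rw [div_lt_iff₀ (by positivity)]; linarith
          simp only; linarith
        · have : 1 < 2 / (1+x) := by rw [lt_div_iff₀ (by positivity)]; linarith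
          simp only; linarith
      · rintro ⟨h0, h1⟩
        have : 0 < 2 - u := by linarith
        refine ⟨u/(2-u), ⟨by positivity, ?_⟩, ?_⟩
        · rw [div_lt_one this]; linarith
        · simp only; field_simp; ring)
    (fun x hx => by
      have h0 := hx.1
      try simp only
      rw [abs_of_pos (by positivity)]
      have e1 : 1 - (2 - 2/(1+x))/2 = (1+x)⁻¹ := by field_simp; ring
      have e2 : 2 - (2 - 2/(1+x)) = 2/(1+x) := by ring
      have e3 : 2 - 2/(1+x) = 2*x/(1+x) := by field_simp; ring
      rw [e1, e2, e3, log_inv, log_div (by norm_num) (by positivity)]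
      field_simp
      ring)
  rw [key.1]
  obtain ⟨h1, h1'⟩ := lemB1
  obtain ⟨h2, h2'⟩ := lemB2
  have hd : ∀ x ∈ uIcc (0:ℝ) 1, HasDerivAt (fun x => log 2 * log (1+x)^2/2 - log (1+x)^3/3) ((log 2 * log (1+x) - log (1+x)^2)/(1+x)) x := by
    intro x hx
    rw [uIcc_of_le (by norm_num)] at hx
    have hx0 : 1 + x ≠ 0 := by linarith [hx.1]
    have hl : HasDerivAt (fun x : ℝ => log (1+x)) (1/(1+x)) x := by
      simpa using ((hasDerivAt_id x).const_add 1).log hx0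
    have := ((hl.pow 2).const_mul (log 2)).div_const 2 |>.sub ((hl.pow 3).div_const 3)
    convert! this using 1
    norm_num
    ring
  have hci : IntervalIntegrable (fun x => ((log 2 * log (1+x) - log (1+x)^2)/(1+x))) volume 0 1 := by
    apply ContinuousOn.intervalIntegrable
    intro x hx
    rw [uIcc_of_le (by norm_num)] at hx
    have hx0 : 1 + x ≠ 0 := by linarith [hx.1]
    apply ContinuousAt.continuousWithinAt
    fun_prop (disch := assumption)
  have hv := intervalIntegral.integral_eq_sub_of_hasDerivAt hd hci
  rw [intervalIntegral.integral_of_le (by norm_num), integral_Ioc_eq_integral_Ioo] at hv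
  have hci' := (intervalIntegrable_iff_integrableOn_Ioo_of_le (by norm_num)).1 hci
  have i1 : Integrable (fun x : ℝ => log (1+x)^2/x - log 2 * (log (1+x)/x)) (volume.restrict (Ioo 0 1)) := h2'.sub (h1'.const_mul (log 2))
  rw [integral_add i1 hci', integral_sub h2' (h1'.const_mul (log 2)), integral_const_mul, h1, h2, hv]
  norm_num
  ring

theorem re_pos_aux {z : ℂ} (hz : ‖z‖ ≤ 1) : 0 < ((√2 : ℂ) + z).re := by
  have h1 := (abs_le.1 ((Complex.abs_re_le_norm z).trans hz)).1
  have h2 : (1:ℝ) < √2 := by rw [Real.lt_sqrt (by norm_num)]; norm_num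
  simp only [Complex.add_re, Complex.ofReal_re]; linarith

noncomputable def gg (z : ℂ) : ℂ := Complex.log ((√2 : ℂ) + z)

theorem gg_diff {z : ℂ} (hz : ‖z‖ ≤ 1) : DifferentiableAt ℂ gg z := by
  unfold gg
  apply DifferentiableAt.clog (by fun_prop)
  exact Or.inl (re_pos_aux hz)

theorem gg_pow_dcc (k : ℕ) : DiffContOnCl ℂ (fun z => gg z ^ k) (Metric.ball 0 |1|) := by
  apply DifferentiableOn.diffContOnCl
  intro z hz
  have : ‖z‖ ≤ 1 := by
    have := Metric.closure_ball_subset_closedBall hz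
    simpa using this
  exact ((gg_diff this).pow k).differentiableWithinAt

theorem circ1 : Real.circleAverage (fun z => gg z ^ 3) 0 1 = gg 0 ^ 3 := by
  exact (gg_pow_dcc 3).circleAverage

theorem circ0 : Real.circleAverage (fun z => gg z ^ 2) 0 1 = gg 0 ^ 2 := by
  exact (gg_pow_dcc 2).circleAverage

theorem den_aux {z : ℂ} (hz : ‖z‖ = 1) {t : ℝ} (h0 : 0 ≤ t) (h1 : t ≤ 1) : (√2 : ℂ) * z + t ≠ 0 := by
  intro h
  have h2 : (1:ℝ) < √2 := by rw [Real.lt_sqrt (by norm_num)]; norm_num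
  have h3 : (√2 : ℂ) * z = -t := by linear_combination h
  have h4 := congrArg norm h3
  rw [norm_mul, hz, norm_neg, Complex.norm_real, Complex.norm_real, Real.norm_of_nonneg h0, Real.norm_of_nonneg (by positivity)] at h4
  linarith

theorem circ2 {t : ℝ} (h0 : 0 < t) (h1 : t ≤ 1) :
    Real.circleAverage (fun z => gg z ^ 2 / ((√2 : ℂ) * z + t)) 0 1 = (gg 0 ^ 2 - gg (-(t/√2)) ^ 2) / t := by
  have h2 : (1:ℝ) < √2 := by rw [Real.lt_sqrt (by norm_num)]; norm_num
  have hc : (√2 : ℂ) ≠ 0 := by exact_mod_cast (by positivity : √2 ≠ 0)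
  have ht : (t : ℂ) ≠ 0 := by exact_mod_cast h0.ne'
  have hw : (-((t:ℂ)/√2)) ∈ Metric.ball (0:ℂ) |1| := by
    simp only [abs_one, mem_ball_zero_iff, norm_neg, norm_div, Complex.norm_real]
    rw [Real.norm_of_nonneg h0.le, Real.norm_of_nonneg (by positivity), div_lt_one (by positivity)]
    linarith
  have hA := (gg_pow_dcc 2).circleAverage_smul_div hw
  have hsph : ∀ z ∈ Metric.sphere (0:ℂ) |1|, (√2 : ℂ) * z + t ≠ 0 := by
    intro z hz
    exact den_aux (by simpa using hz) h0.le h1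
  have hcg : ContinuousOn (fun z => gg z ^ 2) (Metric.sphere (0:ℂ) |1|) := by
    intro z hz
    exact ((gg_diff (by simpa using (mem_sphere_zero_iff_norm.1 hz).le)).pow 2).continuousAt.continuousWithinAt
  have hden : ∀ z ∈ Metric.sphere (0:ℂ) |1|, z - -((t:ℂ)/√2) ≠ 0 := by
    intro z hz h
    apply hsph z hz
    have : z = -((t:ℂ)/√2) := sub_eq_zero.1 h
    rw [this]; field_simp; ring
  have i1 : CircleIntegrable (fun z => gg z ^ 2) 0 1 := by
    apply ContinuousOn.circleIntegrable'
    exact hcg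
  have i2 : CircleIntegrable (fun z => ((z - 0) / (z - -((t:ℂ)/√2))) • gg z ^ 2) 0 1 := by
    apply ContinuousOn.circleIntegrable'
    refine ContinuousOn.smul (f := fun z : ℂ => (z - 0) / (z - -((t:ℂ)/√2))) ?_ hcg
    apply ContinuousOn.div (by fun_prop) (by fun_prop) hden
  have e : Real.circleAverage (fun z => gg z ^ 2 / ((√2 : ℂ) * z + t)) 0 1 =
      Real.circleAverage ((t:ℂ)⁻¹ • ((fun z => gg z ^ 2) - (fun z => ((z - 0) / (z - -((t:ℂ)/√2))) • gg z ^ 2))) 0 1 := by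
    apply Real.circleAverage_congr_sphere
    intro z hz
    have h3 := hsph z hz
    have h4 := hden z hz
    have h5 : z - -((t:ℂ)/√2) = (√2 * z + t)/√2 := by field_simp; ring
    simp only [Pi.smul_apply, Pi.sub_apply, smul_eq_mul, sub_zero]
    rw [h5]
    field_simp
    ring
  rw [e, Real.circleAverage_smul, Real.circleAverage_sub i1 i2, hA, circ0, smul_eq_mul]
  ring

theorem conj_gg {z : ℂ} (hz : ‖z‖ = 1) :
    (starRingEnd ℂ) (gg z) = gg 0 + ∫ t in (0:ℝ)..1, 1 / ((√2 : ℂ) * z + t) := by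
  have hz0 : z ≠ 0 := by intro h; simp [h] at hz
  have hcz : (starRingEnd ℂ) z = z⁻¹ := by
    rw [Complex.inv_def, Complex.normSq_eq_norm_sq, hz]; simp
  have h1 : (starRingEnd ℂ) (gg z) = gg (z⁻¹) := by
    unfold gg
    rw [← Complex.log_conj, map_add, hcz, Complex.conj_ofReal]
    have := re_pos_aux hz.le
    intro h
    rw [Complex.arg_eq_pi_iff] at h
    linarith [h.1]
  have hd : ∀ t ∈ uIcc (0:ℝ) 1, HasDerivAt (fun t : ℝ => gg (t * z⁻¹)) (1 / ((√2 : ℂ) * z + t)) t := by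
    intro t ht
    rw [uIcc_of_le (by norm_num)] at ht
    have hn : ‖(t:ℂ) * z⁻¹‖ ≤ 1 := by
      rw [norm_mul, norm_inv, hz, Complex.norm_real, Real.norm_of_nonneg ht.1]; simpa using ht.2
    have a1 : HasDerivAt (fun t : ℝ => (√2 : ℂ) + t * z⁻¹) (z⁻¹) t := by
      have := ((Complex.ofRealCLM.hasDerivAt (x := t)).mul_const (z⁻¹)).const_add (√2 : ℂ)
      simpa using this
    have a2 := a1.clog_real (Or.inl (re_pos_aux hn))
    have a3 : (√2 : ℂ) + t * z⁻¹ ≠ 0 := by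
      intro h
      have := re_pos_aux hn
      rw [h] at this; simp at this
    have a4 := den_aux hz ht.1 ht.2
    have a5 : z⁻¹ / ((√2 : ℂ) + t * z⁻¹) = 1 / ((√2 : ℂ) * z + t) := by
      field_simp
    rw [a5] at a2
    exact a2
  have hci : IntervalIntegrable (fun t : ℝ => 1 / ((√2 : ℂ) * z + t)) volume 0 1 := by
    apply ContinuousOn.intervalIntegrable
    rw [uIcc_of_le (by norm_num)]
    exact ContinuousOn.div (by fun_prop) (by fun_prop) (fun t ht => den_aux hz ht.1 ht.2)
  rw [intervalIntegral.integral_eq_sub_of_hasDerivAt hd hci, h1]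
  simp

theorem circ3 : Real.circleAverage (fun z => gg z ^ 2 * (starRingEnd ℂ) (gg z)) 0 1 =
    gg 0 ^ 3 + ∫ t in (0:ℝ)..1, (gg 0 ^ 2 - gg (-(t/√2)) ^ 2) / t := by
  have hE : ∀ θ : ℝ, ‖circleMap 0 1 θ‖ = 1 := by intro θ; simp
  have hcg : Continuous (fun θ : ℝ => gg (circleMap 0 1 θ)) := by
    rw [continuous_iff_continuousAt]
    intro θ
    exact ContinuousAt.comp (f := circleMap 0 1) (gg_diff (hE θ).le).continuousAt (continuous_circleMap 0 1).continuousAt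
  have hcm := continuous_circleMap 0 1
  have i0 : IntegrableOn (Function.uncurry fun (θ t : ℝ) => gg (circleMap 0 1 θ) ^ 2 / ((√2 : ℂ) * circleMap 0 1 θ + t)) (uIcc 0 (2*π) ×ˢ uIcc 0 1) := by
    apply ContinuousOn.integrableOn_compact (isCompact_uIcc.prod isCompact_uIcc)
    unfold Function.uncurry
    apply ContinuousOn.div
    · exact ((hcg.comp continuous_fst).pow 2).continuousOn
    · have := hcm.comp (continuous_fst (X := ℝ) (Y := ℝ))
      have h2 : Continuous fun x : ℝ × ℝ => (√2 : ℂ) * circleMap 0 1 x.1 + x.2 := by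
        apply Continuous.add
        · exact continuous_const.mul this
        · fun_prop
      exact h2.continuousOn
    · rintro ⟨θ, t⟩ ⟨_, ht⟩
      rw [uIcc_of_le (by norm_num)] at ht
      exact den_aux (hE θ) ht.1 ht.2
  have i1 := i0.mono_set (prod_mono (uIoc_subset_uIcc (a := 0) (b := 2*π)) (uIoc_subset_uIcc (a := (0:ℝ)) (b := 1)))
  have sw := intervalIntegral_intervalIntegral_swap i1
  have a1 : ∀ θ : ℝ, gg (circleMap 0 1 θ) ^ 2 * (starRingEnd ℂ) (gg (circleMap 0 1 θ)) =
      gg 0 * gg (circleMap 0 1 θ) ^ 2 + ∫ t in (0:ℝ)..1, gg (circleMap 0 1 θ) ^ 2 / ((√2 : ℂ) * circleMap 0 1 θ + t) := by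
    intro θ
    rw [conj_gg (hE θ), mul_add, ← intervalIntegral.integral_const_mul]
    congr 1
    · ring
    · simp only [mul_one_div]
  have j1 : IntervalIntegrable (fun θ : ℝ => gg 0 * gg (circleMap 0 1 θ) ^ 2) volume 0 (2*π) :=
    (continuous_const.mul (hcg.pow 2)).intervalIntegrable _ _
  have j2 : IntervalIntegrable (fun θ : ℝ => ∫ t in (0:ℝ)..1, gg (circleMap 0 1 θ) ^ 2 / ((√2 : ℂ) * circleMap 0 1 θ + t)) volume 0 (2*π) := by
    have : (fun θ : ℝ => ∫ t in (0:ℝ)..1, gg (circleMap 0 1 θ) ^ 2 / ((√2 : ℂ) * circleMap 0 1 θ + t)) =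
       fun θ => gg (circleMap 0 1 θ) ^ 2 * (starRingEnd ℂ) (gg (circleMap 0 1 θ)) - gg 0 * gg (circleMap 0 1 θ) ^ 2 := by
      ext θ; rw [a1 θ]; ring
    rw [this]
    apply Continuous.intervalIntegrable
    exact ((hcg.pow 2).mul (Complex.continuous_conj.comp hcg)).sub (continuous_const.mul (hcg.pow 2))
  have c0 := circ0
  unfold Real.circleAverage at c0 ⊢
  simp_rw [a1]
  rw [intervalIntegral.integral_add j1 j2, sw, smul_add, intervalIntegral.integral_const_mul, ← mul_smul_comm, c0, ← intervalIntegral.integral_smul]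
  congr 1
  · ring
  · apply intervalIntegral.integral_congr_ae
    filter_upwards with t ht
    rw [uIoc_of_le (by norm_num)] at ht
    exact circ2 ht.1 ht.2

theorem gg_real {x : ℝ} (hx : -1 ≤ x) : gg x = (log (√2 + x) : ℝ) := by
  have h2 : (1:ℝ) < √2 := by rw [Real.lt_sqrt (by norm_num)]; norm_num
  unfold gg
  rw [Complex.ofReal_log (by linarith)]
  push_cast; rfl

theorem lemX : ∫ t in (0:ℝ)..1, (gg 0 ^ 2 - gg (-(t/√2)) ^ 2) / t =
    ((-(∫ t in (0:ℝ)..1, log (1-t/2) * log (2-t) / t) : ℝ) : ℂ) := by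
  rw [← intervalIntegral.integral_neg, ← intervalIntegral.integral_ofReal]
  apply intervalIntegral.integral_congr
  intro t ht
  rw [uIcc_of_le (by norm_num)] at ht
  have h2 : (1:ℝ) < √2 := by rw [Real.lt_sqrt (by norm_num)]; norm_num
  have hs : √2 * √2 = 2 := Real.mul_self_sqrt (by norm_num)
  have hb : t / √2 ≤ 1 := by rw [div_le_one (by positivity)]; linarith [ht.2]
  have e0 := gg_real (x := 0) (by norm_num)
  have e1 := gg_real (x := -(t/√2)) (by linarith)
  simp only [Complex.ofReal_zero, add_zero] at e0
  push_cast at e1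
  simp only
  rw [e0, e1]
  have l0 : log √2 = log 2 / 2 := by rw [Real.log_sqrt (by norm_num)]
  have l1 : √2 + -(t/√2) = √2 * (1 - t/2) := by
    field_simp
    rw [Real.sq_sqrt (by norm_num)]; ring
  have hp : (1 - t/2) ≠ 0 := by linarith [ht.2]
  have l2 : 2 - t = 2 * (1 - t/2) := by ring
  rw [l1, l2, log_mul (by positivity) hp, log_mul (by positivity) hp, l0]
  push_cast
  ring

theorem logD (θ : ℝ) : log (3 + 2*√2 * cos θ) = 2 * (gg (circleMap 0 1 θ)).re := by
  have hs : √2 * √2 = 2 := Real.mul_self_sqrt (by norm_num)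
  unfold gg
  rw [Complex.log_re]
  have : 3 + 2*√2 * cos θ = ‖(√2:ℂ) + circleMap 0 1 θ‖^2 := by
    rw [← Complex.normSq_eq_norm_sq, Complex.normSq_apply]
    simp [circleMap, Complex.exp_re, Complex.exp_im]
    nlinarith [Real.sin_sq_add_cos_sq θ]
  rw [this, Real.log_pow]; norm_num

theorem lemK2 : ∫ θ in (0:ℝ)..(2*π), log (3 + 2*√2 * cos θ)^3 =
    2 * π * (log 2 ^ 3 - 6 * ∫ t in (0:ℝ)..1, log (1-t/2) * log (2-t) / t) := by
  have hE : ∀ θ : ℝ, ‖circleMap 0 1 θ‖ = 1 := by intro θ; simp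
  have hcg : Continuous (fun θ : ℝ => gg (circleMap 0 1 θ)) := by
    rw [continuous_iff_continuousAt]
    intro θ
    exact ContinuousAt.comp (f := circleMap 0 1) (gg_diff (hE θ).le).continuousAt (continuous_circleMap 0 1).continuousAt
  have c1 := circ1
  have c3 := circ3
  rw [lemX] at c3
  set G := ∫ t in (0:ℝ)..1, log (1-t/2) * log (2-t) / t with hG
  have e0 := gg_real (x := 0) (by norm_num)
  have l0 : log √2 = log 2 / 2 := by rw [Real.log_sqrt (by norm_num)]
  simp only [Complex.ofReal_zero, add_zero, l0] at e0
  rw [e0] at c1 c3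
  unfold Real.circleAverage at c1 c3
  have hpi : (2*π) ≠ 0 := by positivity
  rw [inv_smul_eq_iff₀ hpi] at c1 c3
  have k1 : IntervalIntegrable (fun θ : ℝ => gg (circleMap 0 1 θ)^3) volume 0 (2*π) := (hcg.pow 3).intervalIntegrable _ _
  have k3 : IntervalIntegrable (fun θ : ℝ => gg (circleMap 0 1 θ)^2 * (starRingEnd ℂ) (gg (circleMap 0 1 θ))) volume 0 (2*π) :=
    ((hcg.pow 2).mul (Complex.continuous_conj.comp hcg)).intervalIntegrable _ _
  have r1 := congrArg Complex.re c1
  have r3 := congrArg Complex.re c3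
  have q1 := intervalIntegral.intervalIntegral_re k1
  have q3 := intervalIntegral.intervalIntegral_re k3
  simp only [RCLike.re_to_complex] at q1 q3
  rw [← q1] at r1
  rw [← q3] at r3
  have hpt : ∀ θ, log (3 + 2*√2 * cos θ)^3 = 2 * (gg (circleMap 0 1 θ)^3).re +
      6 * (gg (circleMap 0 1 θ)^2 * (starRingEnd ℂ) (gg (circleMap 0 1 θ))).re := by
    intro θ
    rw [logD]
    simp [pow_succ]
    ring
  simp_rw [hpt]
  have m1 : IntervalIntegrable (fun θ : ℝ => 2 * (gg (circleMap 0 1 θ)^3).re) volume 0 (2*π) :=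
    (continuous_const.mul (Complex.continuous_re.comp (hcg.pow 3))).intervalIntegrable _ _
  have m3 : IntervalIntegrable (fun θ : ℝ => 6 * (gg (circleMap 0 1 θ)^2 * (starRingEnd ℂ) (gg (circleMap 0 1 θ))).re) volume 0 (2*π) :=
    (continuous_const.mul (Complex.continuous_re.comp ((hcg.pow 2).mul (Complex.continuous_conj.comp hcg)))).intervalIntegrable _ _
  rw [intervalIntegral.integral_add m1 m3, intervalIntegral.integral_const_mul, intervalIntegral.integral_const_mul, r1, r3]
  have z1 : ((2*π) • (((log 2 / 2 : ℝ) : ℂ))^3).re = 2*π*(log 2/2)^3 := by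
    rw [← Complex.ofReal_pow, Complex.real_smul, ← Complex.ofReal_mul, Complex.ofReal_re]
  have z3 : ((2*π) • ((((log 2 / 2 : ℝ) : ℂ))^3 + ((-G : ℝ) : ℂ))).re = 2*π*((log 2/2)^3 - G) := by
    rw [← Complex.ofReal_pow, ← Complex.ofReal_add, Complex.real_smul, ← Complex.ofReal_mul, Complex.ofReal_re]; ring
  rw [z1, z3]
  ring

theorem lemK : ∫ θ in (-π)..0, log (3 + 2*√2 * cos θ)^3 = π^3 * log 2 / 2 - 3 * π / 4 * ZZ 2 := by
  have h := lemK2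
  rw [lemG] at h
  have hpos : ∀ θ, 0 < 3 + 2*√2*cos θ := by
    intro θ
    have hs : √2 * √2 = 2 := Real.mul_self_sqrt (by norm_num)
    have hp : 0 < √2 := by positivity
    nlinarith [Real.neg_one_le_cos θ, sq_nonneg (√2 - 3/2)]
  have hc : Continuous (fun θ : ℝ => log (3 + 2*√2 * cos θ)^3) := by
    apply Continuous.pow
    exact Continuous.log (by fun_prop) (fun θ => (hpos θ).ne')
  have s1 := intervalIntegral.integral_add_adjacent_intervals (hc.intervalIntegrable 0 π (μ := volume)) (hc.intervalIntegrable π (2*π))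
  have s2 := intervalIntegral.integral_comp_sub_left (a := 0) (b := π) (fun θ : ℝ => log (3 + 2*√2 * cos θ)^3) (2*π)
  have s3 := intervalIntegral.integral_comp_neg (a := 0) (b := π) (fun θ : ℝ => log (3 + 2*√2 * cos θ)^3)
  simp only [cos_two_pi_sub, cos_neg, neg_zero, sub_zero] at s2 s3
  rw [show 2*π-π = π by ring] at s2
  rw [← s3]
  rw [← s2, h] at s1
  linarith

noncomputable def LL (z : ℝ) : ℝ := log (z^2 - √2*z + 1) - log (z^2 + √2*z+1)

theorem q_pos (z : ℝ) : 0 < z^2 - √2*z + 1 := by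
  have hs : √2 * √2 = 2 := Real.mul_self_sqrt (by norm_num)
  nlinarith [sq_nonneg (z - √2/2)]

theorem q_pos' (z : ℝ) : 0 < z^2 + √2*z + 1 := by
  have hs : √2 * √2 = 2 := Real.mul_self_sqrt (by norm_num)
  nlinarith [sq_nonneg (z + √2/2)]

theorem LL_deriv (z : ℝ) : HasDerivAt LL (2*√2*(z^2-1)/(z^4+1)) z := by
  have hs : √2 ^ 2 = 2 := Real.sq_sqrt (by norm_num)
  have p1 := q_pos z
  have p2 := q_pos' z
  have a1 : HasDerivAt (fun z : ℝ => z^2 - √2*z + 1) (2*z - √2) z := by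
    have := ((hasDerivAt_pow 2 z).sub ((hasDerivAt_id z).const_mul √2)).add_const 1
    simpa using this
  have a2 : HasDerivAt (fun z : ℝ => z^2 + √2*z + 1) (2*z + √2) z := by
    have := ((hasDerivAt_pow 2 z).add ((hasDerivAt_id z).const_mul √2)).add_const 1
    simpa using this
  refine ((a1.log p1.ne').sub (a2.log p2.ne')).congr_deriv ?_
  have : z^4+1 = (z^2 - √2*z + 1) * (z^2 + √2*z + 1) := by ring_nf; rw [hs]; ring
  rw [this, div_sub_div _ _ p1.ne' p2.ne']
  congr 1
  ring

theorem lemR : ∫ z in (0:ℝ)..1, LL z ^ 3 * (4*z/(z^4+1)) = - ∫ θ in (-π)..0, log (3 + 2*√2 * cos θ)^3 := by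
  have hs : √2 ^ 2 = 2 := Real.sq_sqrt (by norm_num)
  have hLc : Continuous LL := by
    rw [continuous_iff_continuousAt]; exact fun z => (LL_deriv z).continuousAt
  have hneg : ∀ z, LL (-z) = - LL z := by intro z; unfold LL; ring_nf
  have hc : Continuous (fun z : ℝ => LL z ^ 3 * (√2/(z^2-√2*z+1))) :=
    (hLc.pow 3).mul (continuous_const.div (by fun_prop) (fun z => (q_pos z).ne'))
  have hc' : Continuous (fun z : ℝ => LL z ^ 3 * (√2/(z^2+√2*z+1))) :=
    (hLc.pow 3).mul (continuous_const.div (by fun_prop) (fun z => (q_pos' z).ne'))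
  have h1 : ∫ z in (0:ℝ)..1, LL z ^ 3 * (4*z/(z^4+1)) = ∫ z in (-1:ℝ)..1, LL z ^ 3 * (√2/(z^2-√2*z+1)) := by
    rw [← intervalIntegral.integral_add_adjacent_intervals (hc.intervalIntegrable (-1) 0) (hc.intervalIntegrable 0 1)]
    have := intervalIntegral.integral_comp_neg (a := 0) (b := 1) (fun z : ℝ => LL z ^ 3 * (√2/(z^2-√2*z+1)))
    simp only [neg_zero] at this
    rw [← this, ← intervalIntegral.integral_add (Continuous.intervalIntegrable (by
      have : (fun x => LL (-x) ^ 3 * (√2 / ((-x) ^ 2 - √2 * -x + 1))) = (fun z : ℝ => - (LL z ^ 3 * (√2/(z^2+√2*z+1)))) := by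
        ext x; rw [hneg]; ring_nf
      rw [this]; exact hc'.neg) _ _) (hc.intervalIntegrable _ _)]
    apply intervalIntegral.integral_congr
    intro z _
    have p1 := q_pos z
    have p2 := q_pos' z
    have : z^4+1 = (z^2 - √2*z + 1) * (z^2 + √2*z + 1) := by ring_nf; rw [hs]; ring
    simp only
    have key : 4*z/((z^2 - √2*z + 1) * (z^2 + √2*z + 1)) = √2/(z^2 - √2*z + 1) - √2/(z^2 + √2*z + 1) := by
      rw [div_sub_div _ _ p1.ne' p2.ne']
      congr 1
      linear_combination (-2*z)*hs
    rw [hneg, this, show (-z)^2 - √2 * -z + 1 = z^2 + √2*z+1 by ring, key]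
    ring
  rw [h1]
  have hd : ∀ x ∈ uIcc (-1:ℝ) 1, HasDerivAt (fun z : ℝ => 2 * arctan (√2*z-1) - π/4) (√2/(x^2-√2*x+1)) x := by
    intro x _
    have a1 : HasDerivAt (fun z : ℝ => √2*z-1) √2 x := by
      simpa using ((hasDerivAt_id x).const_mul √2).sub_const 1
    refine ((a1.arctan.const_mul 2).sub_const (π/4)).congr_deriv ?_
    have p1 := q_pos x
    have : 1 + (√2*x-1)^2 = 2 * (x^2-√2*x+1) := by ring_nf; rw [hs]; ring
    rw [this]; field_simp
  have hcos : ∀ x : ℝ, 3 + 2*√2*cos (2 * arctan (√2*x-1) - π/4) = (x^2+√2*x+1)/(x^2-√2*x+1) := by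
    intro x
    have p1 := q_pos x
    have hq : 1 + (√2*x-1)^2 = 2 * (x^2-√2*x+1) := by ring_nf; rw [hs]; ring
    rw [cos_sub, cos_two_mul, sin_two_mul, cos_pi_div_four, sin_pi_div_four, cos_sq_arctan]
    have hsc : 2 * sin (arctan (√2*x-1)) * cos (arctan (√2*x-1)) = 2 * (√2*x-1) * (1/(1+(√2*x-1)^2)) := by
      rw [← cos_sq_arctan]
      have := tan_mul_cos (cos_arctan_pos (√2*x-1)).ne'
      rw [tan_arctan] at this
      rw [← this]; ring
    rw [hsc, hq, eq_div_iff p1.ne']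
    have h : 1 / (2 * (x^2-√2*x+1)) * (x^2-√2*x+1) = 1/2 := by
      have := p1.ne'
      generalize x^2-√2*x+1 = q at this
      field_simp
    generalize 1 / (2 * (x^2-√2*x+1)) = i at h
    linear_combination (2*√2*x*i*(x^2-√2*x+1) - (x^2-√2*x+1))*hs + (4*√2*x)*h
  have hlog : ∀ x : ℝ, LL x ^ 3 = - log (3 + 2*√2*cos (2 * arctan (√2*x-1) - π/4))^3 := by
    intro x
    rw [hcos, log_div (q_pos' x).ne' (q_pos x).ne']
    unfold LL; ring
  have hpos : ∀ θ, 0 < 3 + 2*√2*cos θ := by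
    intro θ
    have hs : √2 * √2 = 2 := Real.mul_self_sqrt (by norm_num)
    have hp : 0 < √2 := by positivity
    nlinarith [Real.neg_one_le_cos θ, sq_nonneg (√2 - 3/2)]
  have hcD : Continuous (fun θ : ℝ => log (3 + 2*√2 * cos θ)^3) := by
    apply Continuous.pow
    exact Continuous.log (by fun_prop) (fun θ => (hpos θ).ne')
  have sub := intervalIntegral.integral_comp_mul_deriv hd (by
    exact (continuous_const.div (by fun_prop) (fun z => (q_pos z).ne')).continuousOn) hcD
  have hdb : ∀ x : ℝ, ∀ y : ℝ, -(π/2) < x → x < π/2 → tan x = y → arctan y = x := by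
    intro x y h1 h2 h3
    rw [← h3, arctan_tan h1 h2]
  have hp := pi_pos
  have ht8 : tan (π/8) = √2 - 1 := by
    have h2 : (1:ℝ) < √2 := by rw [Real.lt_sqrt (by norm_num)]; norm_num
    rw [tan_eq_sin_div_cos]
    have hc0 : 0 < cos (π/8) := cos_pos_of_mem_Ioo ⟨by linarith, by linarith⟩
    have c2 := cos_sq (π/8)
    have s2 := sin_two_mul (π/8)
    rw [show 2*(π/8) = π/4 by ring] at c2 s2
    rw [cos_pi_div_four] at c2
    rw [sin_pi_div_four] at s2
    rw [div_eq_iff hc0.ne']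
    have : 2 * cos (π/8) * sin (π/8) = 2 * cos (π/8) * ((√2-1) * cos (π/8)) := by
      nlinarith
    exact mul_left_cancel₀ (by positivity) this
  have at1 : arctan (√2*1-1) = π/8 := hdb _ _ (by linarith) (by linarith) (by rw [ht8]; ring)
  have at2 : arctan (√2*(-1)-1) = -(3*π/8) := by
    apply hdb _ _ (by linarith) (by linarith)
    rw [tan_neg, show 3*π/8 = π/2 - π/8 by ring, tan_pi_div_two_sub, ht8]
    have h2 : (1:ℝ) < √2 := by rw [Real.lt_sqrt (by norm_num)]; norm_num
    have : √2 - 1 ≠ 0 := by linarith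
    field_simp
    ring_nf
    rw [hs]; ring
  simp only [at1, at2] at sub
  rw [show 2 * (π/8) - π/4 = 0 by ring, show 2 * -(3*π/8) - π/4 = -π by ring] at sub
  rw [← sub, ← intervalIntegral.integral_neg]
  apply intervalIntegral.integral_congr
  intro x _
  simp only [Function.comp]
  rw [hlog]; ring

theorem lemFinal : ∫ z in (0:ℝ)..1, LL z ^ 3 * (4*z/(z^4+1)) = -(π^3 * log 2 / 2) + 3 * π / 4 * ZZ 2 := by
  rw [lemR, lemK]; ring

theorem p₁_eq : p₁ = (√2/2 : ℝ) + (√2/2 : ℝ) * Complex.I := by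
  unfold p₁
  rw [mul_comm, show ((π:ℂ)/4) = ((π/4 : ℝ) : ℂ) by push_cast; rfl, Complex.exp_mul_I,
    ← Complex.ofReal_cos, ← Complex.ofReal_sin, cos_pi_div_four, sin_pi_div_four]

theorem p₂_eq : p₂ = -(√2/2 : ℝ) + (√2/2 : ℝ) * Complex.I := by
  unfold p₂
  rw [show -(Complex.I * ((π:ℂ)/4)) = ((-(π/4) : ℝ) : ℂ) * Complex.I by push_cast; ring, Complex.exp_mul_I,
    ← Complex.ofReal_cos, ← Complex.ofReal_sin, cos_neg, sin_neg, cos_pi_div_four, sin_pi_div_four]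
  push_cast; ring

theorem ne_aux (t : ℝ) (w : ℂ) (h : w.im ≠ 0) : (t:ℂ) - w ≠ 0 := by
  intro h0
  apply h
  have := congrArg Complex.im h0
  simpa using this

theorem F_aux (t : ℝ) : F₂ t = ((2*√2*(t^2-1)/(t^4+1) : ℝ) : ℂ) ∧
    F₁ t = Complex.I * ((4*t/(t^4+1) : ℝ) : ℂ) := by
  have hs : (√2 : ℂ)^2 = 2 := by
    rw [← Complex.ofReal_pow, Real.sq_sqrt (by norm_num)]; norm_num
  have hI := Complex.I_sq
  have hp : 0 < √2 := by positivity
  have n1 : (t:ℂ) - p₁ ≠ 0 := ne_aux t _ (by simp [p₁_eq])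
  have n2 : (t:ℂ) - p₂ ≠ 0 := ne_aux t _ (by simp [p₂_eq])
  have n3 : (t:ℂ) - p₃ ≠ 0 := ne_aux t _ (by simp [p₃, p₁_eq])
  have n4 : (t:ℂ) - p₄ ≠ 0 := ne_aux t _ (by simp [p₄, p₂_eq])
  have hq1 : ((t:ℂ) - p₁) * (t - p₃) = t^2 - Complex.I := by
    rw [p₃, p₁_eq]; push_cast
    linear_combination (-1/4 - Complex.I/2 - Complex.I^2/4) * hs - 1/2 * hI
  have hq2 : ((t:ℂ) - p₂) * (t - p₄) = t^2 + Complex.I := by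
    rw [p₄, p₂_eq]; push_cast
    linear_combination (-1/4 + Complex.I/2 - Complex.I^2/4) * hs - 1/2 * hI
  have m1 : (t:ℂ)^2 - Complex.I ≠ 0 := by rw [← hq1]; exact mul_ne_zero n1 n3
  have m2 : (t:ℂ)^2 + Complex.I ≠ 0 := by rw [← hq2]; exact mul_ne_zero n2 n4
  have hd : (t:ℂ)^4 + 1 = (t^2 - Complex.I) * (t^2 + Complex.I) := by linear_combination hI
  have s13 : 1 / ((t:ℂ) - p₁) - 1 / (t - p₃) = 2 * p₁ / (t^2 - Complex.I) := by
    rw [div_sub_div _ _ n1 n3, hq1, p₃]; ring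
  have s24 : 1 / ((t:ℂ) - p₂) - 1 / (t - p₄) = 2 * p₂ / (t^2 + Complex.I) := by
    rw [div_sub_div _ _ n2 n4, hq2, p₄]; ring
  have a13 : 1 / ((t:ℂ) - p₁) + 1 / (t - p₃) = 2 * t / (t^2 - Complex.I) := by
    rw [div_add_div _ _ n1 n3, hq1, p₃]; ring
  have a24 : 1 / ((t:ℂ) - p₂) + 1 / (t - p₄) = 2 * t / (t^2 + Complex.I) := by
    rw [div_add_div _ _ n2 n4, hq2, p₄]; ring
  constructor
  · have : F₂ t = (1 / ((t:ℂ) - p₁) - 1 / (t - p₃)) - (1 / ((t:ℂ) - p₂) - 1 / (t - p₄)) := by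
      unfold F₂; ring
    rw [this, s13, s24, div_sub_div _ _ m1 m2]
    push_cast
    rw [hd]
    congr 1
    rw [p₁_eq, p₂_eq]; push_cast
    linear_combination (2 * (√2:ℂ)) * hI
  · have : F₁ t = (1 / ((t:ℂ) - p₁) + 1 / (t - p₃)) - (1 / ((t:ℂ) - p₂) + 1 / (t - p₄)) := by
      unfold F₁; ring
    rw [this, a13, a24, div_sub_div _ _ m1 m2]
    push_cast
    rw [hd, ← mul_div_assoc]
    congr 1
    ring

theorem step_aux (k : ℕ) (c : ℝ) (z : ℝ) :
    ∫ t in (0:ℝ)..z, ((c * LL t ^ k : ℝ) : ℂ) * F₂ t = ((c/(k+1) * LL z ^ (k+1) : ℝ) : ℂ) := by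
  have hLc : Continuous LL := by
    rw [continuous_iff_continuousAt]; exact fun z => (LL_deriv z).continuousAt
  have h0 : LL 0 = 0 := by simp [LL]
  simp_rw [(F_aux _).1, ← Complex.ofReal_mul]
  rw [intervalIntegral.integral_ofReal]
  congr 1
  have hd : ∀ t ∈ uIcc 0 z, HasDerivAt (fun t => c/(k+1) * LL t ^ (k+1)) (c * LL t ^ k * (2*√2*(t^2-1)/(t^4+1))) t := by
    intro t _
    refine (((LL_deriv t).pow (k+1)).const_mul (c/(k+1))).congr_deriv ?_
    have : (k:ℝ) + 1 ≠ 0 := by positivity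
    simp only [Nat.add_sub_cancel]
    push_cast
    field_simp
  rw [intervalIntegral.integral_eq_sub_of_hasDerivAt hd]
  · simp [h0]
  · apply Continuous.intervalIntegrable
    apply (continuous_const.mul (hLc.pow k)).mul
    exact Continuous.div (by fun_prop) (by fun_prop) (fun t => by positivity)

theorem stmt_15 :
    Omega [F₂, F₂, F₂, F₁] 1 =
      -(Complex.I * (Real.pi : ℂ) ^ 3 / 12) * ((Real.log 2 : ℝ) : ℂ) +
        Complex.I * (Real.pi : ℂ) / 4 * riemannZeta 3 := by
  simp only [Omega, List.foldl_cons, List.foldl_nil]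
  have e1 : ∀ z : ℝ, ∫ t in (0:ℝ)..z, (1:ℂ) * F₂ t = ((1 * LL z ^ 1 : ℝ) : ℂ) := by
    intro z
    have := step_aux 0 1 z
    simpa using this
  simp_rw [e1, step_aux, (F_aux _).2]
  have e2 : ∀ t : ℝ, ((1 / ((1:ℕ) + 1) / (((1:ℕ) + 1 : ℕ) + 1) * LL t ^ (1+1+1) : ℝ) : ℂ) * (Complex.I * ((4*t/(t^4+1) : ℝ) : ℂ)) =
      Complex.I / 6 * ((LL t ^ 3 * (4*t/(t^4+1)) : ℝ) : ℂ) := by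
    intro t
    push_cast
    ring
  simp_rw [e2]
  rw [intervalIntegral.integral_const_mul, intervalIntegral.integral_ofReal, lemFinal]
  push_cast
  rw [ZZ2]
  ring
end
end
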